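/- Let d ≥ 1, let α = (α_1,…,α_d) be a multi-index with α_j > −1/2 for each j, and let 0 < λ < β < 1. Set c_λ = ∫_0^∞ u^{−λ−1}(e^{−u}−1) du (a finite nonzero constant) and define the Laguerre fractional derivative D_λ^α f(x) = (1/c_λ) ∫_0^∞ s^{−λ−1} (P_s^α f(x) − f(x)) ds. Then there exists C > 0, depending only on α, d, β, λ, such that for every bounded measurable f on (0,∞)^d satisfying sup_x |∂_t P_t^α f(x)| ≤ A t^{β−1} for all t > 0, one has: sup_x |D_λ^α f(x)| ≤ C (∥f∥_∞ + A), and sup_x |∂_t P_t^α(D_λ^α f)(x)| ≤ C (∥f∥_∞ + A) t^{β−λ−1} for all t > 0. In particular D_λ^α maps Lip_β(μ_α) boundedly into Lip_{β−λ}(μ_α). -/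

import Mathlib

open MeasureTheory Real Set

noncomputable def besselI (ν z : ℝ) : ℝ :=
  ∑' m : ℕ, (z / 2) ^ (2 * (m : ℝ) + ν) / (Nat.factorial m * Real.Gamma ((m : ℝ) + ν + 1))

/-- The positive orthant `(0,∞)^d`. -/
def posOrthant (d : ℕ) : Set (Fin d → ℝ) := Set.univ.pi fun _ => Set.Ioi 0

/-- The Poisson–Laguerre kernel `p_t^α(x,y)`. -/
noncomputable def plKernel (d : ℕ) (α : Fin d → ℝ) (t : ℝ) (x y : Fin d → ℝ) : ℝ :=
  (1 / (2 * Real.sqrt π)) *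
    ∫ r in Set.Ioo (0 : ℝ) 1,
      (t * Real.exp (t ^ 2 / (4 * Real.log r)) /
          ((1 - r) ^ d * (-Real.log r) ^ ((3 : ℝ) / 2))) *
        (∏ j, (y j / x j) ^ (α j / 2) *
            Real.exp (-((r * x j + y j) / (1 - r)) - α j * Real.log r / 2) *
            besselI (α j) (2 * Real.sqrt (r * x j * y j) / (1 - r))) / r

/-- The Poisson–Laguerre semigroup `P_t^α f`, with the convention `P_0^α f = f`. -/
noncomputable def plP (d : ℕ) (α : Fin d → ℝ) (t : ℝ)
    (f : (Fin d → ℝ) → ℝ) (x : Fin d → ℝ) : ℝ :=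
  if t = 0 then f x else ∫ y in posOrthant d, plKernel d α t x y * f y

/-- The Laguerre fractional derivative `D_λ^α f` for `0 < λ < 1`. -/
noncomputable def laguerreFracDeriv (d : ℕ) (α : Fin d → ℝ) (lam : ℝ)
    (f : (Fin d → ℝ) → ℝ) (x : Fin d → ℝ) : ℝ :=
  (1 / ∫ u in Set.Ioi (0 : ℝ), u ^ (-lam - 1) * (Real.exp (-u) - 1)) *
    ∫ s in Set.Ioi (0 : ℝ), s ^ (-lam - 1) * (plP d α s f x - f x)

open scoped NNReal BoundedContinuousFunction in
theorem Measure.ext_of_integral_eq_on_separating_submonoid {E : Type*} [TopologicalSpace E]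
    [PolishSpace E] [MeasurableSpace E] [BorelSpace E] {μ ν : Measure E} [IsFiniteMeasure μ]
    [IsFiniteMeasure ν] (S : Submonoid (E →ᵇ ℝ))
    (hsep : ∀ x y, x ≠ y → ∃ g ∈ S, g x ≠ g y)
    (h : ∀ g ∈ S, ∫ x, g x ∂μ = ∫ x, g x ∂ν) : μ = ν := by
  let A : StarSubalgebra ℝ (E →ᵇ ℝ) :=
    { Algebra.adjoin ℝ (S : Set (E →ᵇ ℝ)) with
      star_mem' := fun {a} ha => by
        have : star a = a := by ext x; simp
        rw [this]; exact ha }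
  refine ext_of_forall_mem_subalgebra_integral_eq_of_polish (𝕜 := ℝ) (A := A) ?_ ?_
  · intro x y hxy
    obtain ⟨g, hg, hne⟩ := hsep x y hxy
    refine ⟨g, ⟨BoundedContinuousFunction.toContinuousMapStarₐ ℝ g, ?_, rfl⟩, hne⟩
    exact ⟨g, Algebra.subset_adjoin hg, rfl⟩
  · intro g hg
    have hg' : g ∈ Submodule.span ℝ (S : Set (E →ᵇ ℝ)) := by
      have h1 : g ∈ Subalgebra.toSubmodule (Algebra.adjoin ℝ (S : Set (E →ᵇ ℝ))) := hg
      rwa [Algebra.adjoin_eq_span, Submonoid.closure_eq] at h1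
    clear hg
    induction hg' using Submodule.span_induction with
    | mem x hx => exact h x hx
    | zero => simp
    | add x y _ _ hx hy =>
      simp only [BoundedContinuousFunction.coe_add, Pi.add_apply]
      rw [integral_add (x.integrable _) (y.integrable _),
        integral_add (x.integrable _) (y.integrable _), hx, hy]
    | smul a x _ hx =>
      simp only [BoundedContinuousFunction.coe_smul, smul_eq_mul]
      rw [integral_const_mul, integral_const_mul, hx]

open scoped NNReal BoundedContinuousFunction in
/-- The multiplicative family `z ↦ exp (-∑ s_j z_j)`, `s ≥ 0`, of bounded functions on the closed
orthant. -/
noncomputable def expSubmonoid (ι : Type*) [Fintype ι] : Submonoid ((ι → ℝ≥0) →ᵇ ℝ) where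
  carrier := Set.range fun s : ι → ℝ≥0 =>
    BoundedContinuousFunction.ofNormedAddCommGroup
      (fun z : ι → ℝ≥0 => Real.exp (-∑ j, (s j : ℝ) * z j)) (by fun_prop) 1
      (fun z => by
        rw [Real.norm_eq_abs, Real.abs_exp, Real.exp_le_one_iff, neg_nonpos]
        positivity)
  one_mem' := ⟨0, by ext z; simp⟩
  mul_mem' := by
    rintro _ _ ⟨s, rfl⟩ ⟨t, rfl⟩
    refine ⟨s + t, ?_⟩
    ext z
    simp [← Real.exp_add, add_mul, Finset.sum_add_distrib, add_comm]

open scoped NNReal in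
theorem Measure.ext_of_laplace {ι : Type*} [Fintype ι] {μ ν : Measure (ι → ℝ)}
    [IsFiniteMeasure μ] [IsFiniteMeasure ν] (hμ : ∀ᵐ y ∂μ, ∀ j, 0 ≤ y j)
    (hν : ∀ᵐ y ∂ν, ∀ j, 0 ≤ y j)
    (h : ∀ s : ι → ℝ, (∀ j, 0 ≤ s j) →
      ∫ y, Real.exp (-∑ j, s j * y j) ∂μ = ∫ y, Real.exp (-∑ j, s j * y j) ∂ν) : μ = ν := by
  set Φ : (ι → ℝ) → ι → ℝ≥0 := fun y j => (y j).toNNReal with hΦ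
  set Ψ : (ι → ℝ≥0) → ι → ℝ := fun z j => z j with hΨ
  have mΦ : Measurable Φ := by fun_prop
  have mΨ : Measurable Ψ := by fun_prop
  have back : ∀ ρ : Measure (ι → ℝ), (∀ᵐ y ∂ρ, ∀ j, 0 ≤ y j) → (ρ.map Φ).map Ψ = ρ := by
    intro ρ hρ
    rw [Measure.map_map mΨ mΦ]
    conv_rhs => rw [← Measure.map_id (μ := ρ)]
    refine Measure.map_congr ?_
    filter_upwards [hρ] with y hy
    ext j
    simp [hΦ, hΨ, hy j]
  have key : μ.map Φ = ν.map Φ := by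
    have : IsFiniteMeasure (μ.map Φ) := Measure.isFiniteMeasure_map μ Φ
    have : IsFiniteMeasure (ν.map Φ) := Measure.isFiniteMeasure_map ν Φ
    refine Measure.ext_of_integral_eq_on_separating_submonoid (expSubmonoid ι) ?_ ?_
    · intro x y hxy
      classical
      obtain ⟨j, hj⟩ := Function.ne_iff.mp hxy
      refine ⟨_, ⟨Pi.single j 1, rfl⟩, ?_⟩
      simpa [Pi.single_apply, apply_ite NNReal.toReal, ite_mul] using hj
    · rintro _ ⟨s, rfl⟩
      have e : ∀ ρ : Measure (ι → ℝ), (∀ᵐ y ∂ρ, ∀ j, 0 ≤ y j) →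
          ∫ z, Real.exp (-∑ j, (s j : ℝ) * z j) ∂(ρ.map Φ)
            = ∫ y, Real.exp (-∑ j, (s j : ℝ) * y j) ∂ρ := by
        intro ρ hρ
        rw [integral_map mΦ.aemeasurable (Continuous.aestronglyMeasurable (by fun_prop))]
        refine integral_congr_ae ?_
        filter_upwards [hρ] with y hy
        simp [hΦ, hy]
      simpa [e μ hμ, e ν hν] using h (fun j => s j) (fun j => (s j).2)
  rw [← back μ hμ, ← back ν hν, key]

/-- A finite measure on the half line is determined by its Laplace transform. -/
theorem Measure.ext_of_laplace_real {μ ν : Measure ℝ}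
    [IsFiniteMeasure μ] [IsFiniteMeasure ν] (hμ : ∀ᵐ y ∂μ, 0 ≤ y) (hν : ∀ᵐ y ∂ν, 0 ≤ y)
    (h : ∀ s : ℝ, 0 ≤ s → ∫ y, Real.exp (-(s * y)) ∂μ = ∫ y, Real.exp (-(s * y)) ∂ν) :
    μ = ν := by
  have mΦ : Measurable (fun (y : ℝ) (_ : Unit) => y) := by fun_prop
  have back : ∀ ρ : Measure ℝ, (ρ.map (fun (y : ℝ) (_ : Unit) => y)).map (fun z => z ()) = ρ := by
    intro ρ
    rw [Measure.map_map (by fun_prop) mΦ]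
    exact Measure.map_id
  have : IsFiniteMeasure (μ.map (fun (y : ℝ) (_ : Unit) => y)) := Measure.isFiniteMeasure_map _ _
  have : IsFiniteMeasure (ν.map (fun (y : ℝ) (_ : Unit) => y)) := Measure.isFiniteMeasure_map _ _
  rw [← back μ, ← back ν]
  congr 1
  have hS : MeasurableSet {y : Unit → ℝ | ∀ j, 0 ≤ y j} :=
    measurableSet_setOfPred.mpr (Measurable.forall fun j => by measurability)
  refine Measure.ext_of_laplace ?_ ?_ ?_
  · rw [ae_map_iff mΦ.aemeasurable hS]; simpa using hμ
  · rw [ae_map_iff mΦ.aemeasurable hS]; simpa using hν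
  · intro s hs
    rw [integral_map mΦ.aemeasurable (Continuous.aestronglyMeasurable (by fun_prop)),
      integral_map mΦ.aemeasurable (Continuous.aestronglyMeasurable (by fun_prop))]
    simpa using h (s ()) (hs ())

/-- An integrable function on the orthant whose Laplace transform vanishes is zero. -/
theorem ae_eq_zero_of_laplace_eq_zero {ι : Type*} [Fintype ι] {ν : Measure (ι → ℝ)}
    (hν : ∀ᵐ y ∂ν, ∀ j, 0 ≤ y j) {w : (ι → ℝ) → ℝ} (hw : Integrable w ν)
    (h : ∀ s : ι → ℝ, (∀ j, 0 ≤ s j) → ∫ y, w y * Real.exp (-∑ j, s j * y j) ∂ν = 0) :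
    w =ᵐ[ν] 0 := by
  have fin : ∀ v : (ι → ℝ) → ℝ, Integrable v ν →
      IsFiniteMeasure (ν.withDensity fun y => ENNReal.ofReal (v y)) :=
    fun v hv => isFiniteMeasure_withDensity_ofReal hv.2
  have := fin w hw
  have := fin _ hw.neg
  have int : ∀ v : (ι → ℝ) → ℝ, Integrable v ν → ∀ s : ι → ℝ,
      ∫ y, Real.exp (-∑ j, s j * y j) ∂(ν.withDensity fun y => ENNReal.ofReal (v y))
        = ∫ y, max (v y) 0 * Real.exp (-∑ j, s j * y j) ∂ν := by
    intro v hv s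
    rw [integral_withDensity_eq_integral_toReal_smul₀ hv.1.aemeasurable.ennreal_ofReal (by simp)]
    simp [ENNReal.toReal_ofReal']
  have bd : ∀ v : (ι → ℝ) → ℝ, Integrable v ν → ∀ s : ι → ℝ, (∀ j, 0 ≤ s j) →
      Integrable (fun y => max (v y) 0 * Real.exp (-∑ j, s j * y j)) ν := by
    intro v hv s hs
    refine hv.pos_part.mul_bdd (c := 1) (Continuous.aestronglyMeasurable (by fun_prop)) ?_
    filter_upwards [hν] with y hy
    rw [Real.norm_eq_abs, Real.abs_exp, Real.exp_le_one_iff, neg_nonpos]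
    exact Finset.sum_nonneg fun j _ => mul_nonneg (hs j) (hy j)
  have key : (ν.withDensity fun y => ENNReal.ofReal (w y))
      = ν.withDensity fun y => ENNReal.ofReal ((-w) y) := by
    refine Measure.ext_of_laplace ((withDensity_absolutelyContinuous _ _).ae_le hν)
      ((withDensity_absolutelyContinuous _ _).ae_le hν) fun s hs => ?_
    rw [int w hw, int _ hw.neg, ← sub_eq_zero, ← integral_sub (bd w hw s hs) (bd _ hw.neg s hs)]
    refine Eq.trans ?_ (h s hs)
    refine integral_congr_ae (ae_of_all _ fun y => ?_)
    simp only [Pi.neg_apply, ← sub_mul]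
    congr 1
    rcases le_total 0 (w y) with h0 | h0
    · rw [max_eq_left h0, max_eq_right (by linarith)]; ring
    · rw [max_eq_right h0, max_eq_left (by linarith)]; ring
  rw [withDensity_eq_iff hw.1.aemeasurable.ennreal_ofReal
    hw.neg.1.aemeasurable.ennreal_ofReal hw.lintegral_lt_top.ne] at key
  filter_upwards [key] with y hy
  rcases le_total 0 (w y) with h0 | h0
  · rw [ENNReal.ofReal_of_nonpos (show (-w) y ≤ 0 by simpa using h0)] at hy
    exact le_antisymm (ENNReal.ofReal_eq_zero.mp hy) h0
  · rw [ENNReal.ofReal_of_nonpos h0] at hy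
    have := ENNReal.ofReal_eq_zero.mp hy.symm
    simp only [Pi.neg_apply] at this
    simp; linarith

/-- The density of the one-sided stable law of index `1/2`, which subordinates the Poisson
semigroup to the heat semigroup. -/
noncomputable def levyDens (t u : ℝ) : ℝ :=
  t * Real.exp (-(t ^ 2 / (4 * u))) / (2 * √π * (u * √u))

theorem levyDens_nonneg {t u : ℝ} (ht : 0 < t) (hu : 0 < u) : 0 ≤ levyDens t u := by
  unfold levyDens; positivity

theorem measurable_levyDens (t : ℝ) : Measurable (levyDens t) := by
  unfold levyDens; fun_prop

theorem integrableOn_rpow_mul_exp_neg_div {a b : ℝ} (ha : 0 < a) (hb : 0 < b) :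
    IntegrableOn (fun u : ℝ => u ^ (-(a + 1)) * Real.exp (-(b / u))) (Ioi 0) ∧
    ∫ u in Ioi (0 : ℝ), u ^ (-(a + 1)) * Real.exp (-(b / u)) = (1 / b) ^ a * Real.Gamma a := by
  have e : EqOn (fun u : ℝ => (|(-1 : ℝ)| * u ^ ((-1 : ℝ) - 1)) •
      ((u ^ (-1 : ℝ)) ^ (a - 1) * Real.exp (-(b * u ^ (-1 : ℝ)))))
      (fun u : ℝ => u ^ (-(a + 1)) * Real.exp (-(b / u))) (Ioi 0) := by
    intro u hu
    have hu : (0 : ℝ) < u := hu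
    simp only [smul_eq_mul, abs_neg, abs_one, one_mul]
    rw [← Real.rpow_mul hu.le, ← mul_assoc, ← Real.rpow_add hu, Real.rpow_neg_one,
      ← div_eq_mul_inv]
    congr 2
    ring
  constructor
  · rw [← integrableOn_congr_fun e measurableSet_Ioi]
    refine (integrableOn_Ioi_comp_rpow_iff
      (fun v : ℝ => v ^ (a - 1) * Real.exp (-(b * v))) (by norm_num)).mpr ?_
    have := integrableOn_rpow_mul_exp_neg_mul_rpow (s := a - 1) (p := 1) (b := b)
      (by linarith) one_pos hb
    simpa using this
  · rw [← setIntegral_congr_fun measurableSet_Ioi e,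
      integral_comp_rpow_Ioi (fun v : ℝ => v ^ (a - 1) * Real.exp (-(b * v))) (by norm_num),
      Real.integral_rpow_mul_exp_neg_mul_Ioi ha hb]

theorem mul_sqrt_eq_rpow {u : ℝ} (hu : 0 < u) : u * √u = u ^ ((3 : ℝ) / 2) := by
  rw [Real.sqrt_eq_rpow]
  nth_rewrite 1 [← Real.rpow_one u]
  rw [← Real.rpow_add hu]; norm_num

theorem levyDens_eq_rpow {t u : ℝ} (hu : 0 < u) :
    levyDens t u = t / (2 * √π) * (u ^ (-((1 : ℝ) / 2 + 1)) * Real.exp (-(t ^ 2 / 4 / u))) := by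
  rw [levyDens, mul_sqrt_eq_rpow hu, Real.rpow_neg hu.le,
    show (1 : ℝ) / 2 + 1 = 3 / 2 by norm_num, div_div]
  field_simp

theorem levyDens_div_eq_rpow {t u : ℝ} (hu : 0 < u) :
    levyDens t u / u
      = t / (2 * √π) * (u ^ (-((3 : ℝ) / 2 + 1)) * Real.exp (-(t ^ 2 / 4 / u))) := by
  rw [levyDens_eq_rpow hu, show -((3 : ℝ) / 2 + 1) = -((1 : ℝ) / 2 + 1) - 1 by norm_num,
    Real.rpow_sub_one hu.ne']
  ring

theorem integrableOn_levyDens {t : ℝ} (ht : 0 < t) : IntegrableOn (levyDens t) (Ioi 0) :=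
  IntegrableOn.congr_fun ((integrableOn_rpow_mul_exp_neg_div (a := 1 / 2) (b := t ^ 2 / 4)
    (by norm_num) (by positivity)).1.const_mul (t / (2 * √π)))
    (fun _ hu => (levyDens_eq_rpow hu).symm) measurableSet_Ioi

theorem integrableOn_levyDens_div {t : ℝ} (ht : 0 < t) :
    IntegrableOn (fun u => levyDens t u / u) (Ioi 0) :=
  IntegrableOn.congr_fun ((integrableOn_rpow_mul_exp_neg_div (a := 3 / 2) (b := t ^ 2 / 4)
    (by norm_num) (by positivity)).1.const_mul (t / (2 * √π)))
    (fun _ hu => (levyDens_div_eq_rpow hu).symm) measurableSet_Ioi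

theorem one_div_sq_div_four_rpow_half {t : ℝ} (ht : 0 < t) :
    (1 / (t ^ 2 / 4)) ^ ((1 : ℝ) / 2) = 2 / t := by
  rw [← Real.sqrt_eq_rpow, show 1 / (t ^ 2 / 4) = (2 / t) ^ 2 by field_simp; norm_num,
    Real.sqrt_sq (by positivity)]

theorem integral_levyDens {t : ℝ} (ht : 0 < t) : ∫ u in Ioi (0 : ℝ), levyDens t u = 1 := by
  rw [setIntegral_congr_fun measurableSet_Ioi fun u hu => levyDens_eq_rpow hu,
    integral_const_mul, (integrableOn_rpow_mul_exp_neg_div (by norm_num) (by positivity)).2,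
    Real.Gamma_one_half_eq, one_div_sq_div_four_rpow_half ht]
  have : √π ≠ 0 := by positivity
  field_simp

theorem integral_levyDens_div {t : ℝ} (ht : 0 < t) :
    ∫ u in Ioi (0 : ℝ), levyDens t u / u = 2 / t ^ 2 := by
  rw [setIntegral_congr_fun measurableSet_Ioi fun u hu => levyDens_div_eq_rpow hu,
    integral_const_mul, (integrableOn_rpow_mul_exp_neg_div (by norm_num) (by positivity)).2,
    show (3 : ℝ) / 2 = 1 / 2 + 1 by norm_num, Real.Gamma_add_one (by norm_num),
    Real.Gamma_one_half_eq, Real.rpow_add_one (by positivity), one_div_sq_div_four_rpow_half ht]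
  have : √π ≠ 0 := by positivity
  field_simp
  norm_num

/-- The Cauchy–Schlömilch substitution `p = a √u - b / √u`. -/
theorem cauchy_schlomilch {a b : ℝ} (ha : 0 < a) (hb : 0 < b) :
    IntegrableOn (fun u => (a / (2 * √u) + b / (2 * (u * √u))) *
      Real.exp (-(a * √u - b / √u) ^ 2)) (Ioi 0) ∧
    ∫ u in Ioi (0 : ℝ), (a / (2 * √u) + b / (2 * (u * √u))) *
      Real.exp (-(a * √u - b / √u) ^ 2) = √π := by
  set f : ℝ → ℝ := fun u => a * √u - b / √u with hf
  set f' : ℝ → ℝ := fun u => a / (2 * √u) + b / (2 * (u * √u)) with hf'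
  have hd : ∀ u ∈ Ioi (0 : ℝ), HasDerivWithinAt f (f' u) (Ioi 0) u := by
    intro u hu
    have hu : (0 : ℝ) < u := hu
    have h1 := (Real.hasDerivAt_sqrt hu.ne')
    have h2 := (h1.const_mul a).sub ((hasDerivAt_const u b).div h1 (Real.sqrt_pos.mpr hu).ne')
    refine (h2.congr_deriv ?_).hasDerivWithinAt
    have h3 : √u ^ 2 = u := Real.sq_sqrt hu.le
    have h4 : 0 < √u := Real.sqrt_pos.mpr hu
    simp only [hf', h3]
    field_simp
    ring
  have hpos : ∀ u ∈ Ioi (0 : ℝ), 0 < f' u := by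
    intro u hu
    have hu : (0 : ℝ) < u := hu
    simp only [hf']; positivity
  have hinj : InjOn f (Ioi 0) := by
    refine StrictMonoOn.injOn fun x hx y hy hxy => ?_
    have hx : (0 : ℝ) < x := hx
    have h1 : √x < √y := Real.sqrt_lt_sqrt hx.le hxy
    have h2 : 0 < √x := Real.sqrt_pos.mpr hx
    have h3 : b / √y ≤ b / √x := by gcongr
    have h4 : a * √x < a * √y := by gcongr
    simp only [hf]; linarith
  have himg : f '' Ioi 0 = univ := by
    refine eq_univ_of_forall fun p => ?_
    set D := √(p ^ 2 + 4 * (a * b)) with hD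
    have hD2 : D ^ 2 = p ^ 2 + 4 * (a * b) := Real.sq_sqrt (by positivity)
    have hDp : |p| < D := by
      rw [hD]; apply Real.lt_sqrt_of_sq_lt; rw [sq_abs]; linarith [mul_pos ha hb]
    have hq : 0 < (p + D) / (2 * a) := by
      have := neg_abs_le p
      apply div_pos <;> linarith
    refine ⟨((p + D) / (2 * a)) ^ 2, by simpa using pow_pos hq 2, ?_⟩
    simp only [hf, Real.sqrt_sq hq.le]
    have : p + D ≠ 0 := by
      intro h0; rw [h0] at hq; simp at hq
    field_simp
    linear_combination hD2
  have hg : Integrable (fun p : ℝ => Real.exp (-p ^ 2)) := by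
    simpa using integrable_exp_neg_mul_sq (b := 1) one_pos
  have e : EqOn (fun u => |f' u| • Real.exp (-(f u) ^ 2)) (fun u => f' u * Real.exp (-(f u) ^ 2))
      (Ioi 0) := fun u hu => by simp only [abs_of_pos (hpos u hu), smul_eq_mul]
  constructor
  · rw [← integrableOn_congr_fun e measurableSet_Ioi]
    refine (integrableOn_image_iff_integrableOn_abs_deriv_smul measurableSet_Ioi hd hinj
      (fun p => Real.exp (-p ^ 2))).mp ?_
    rw [himg]; exact hg.integrableOn
  · rw [← setIntegral_congr_fun measurableSet_Ioi e,
      ← integral_image_eq_integral_abs_deriv_smul measurableSet_Ioi hd hinj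
        (fun p => Real.exp (-p ^ 2)), himg, setIntegral_univ]
    simpa using integral_gaussian 1

theorem cauchy_schlomilch_symm {a b : ℝ} (ha : 0 < a) (hb : 0 < b) :
    ∫ u in Ioi (0 : ℝ), a / (2 * √u) * Real.exp (-(a * √u - b / √u) ^ 2)
      = ∫ u in Ioi (0 : ℝ), b / (2 * (u * √u)) * Real.exp (-(a * √u - b / √u) ^ 2) := by
  set k := (b / a) ^ 2 with hk
  have hk0 : 0 < k := by positivity
  have hsk : √k = b / a := Real.sqrt_sq (by positivity)
  have hd : ∀ u ∈ Ioi (0 : ℝ), HasDerivWithinAt (fun u => k / u) (-(k / u ^ 2)) (Ioi 0) u := by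
    intro u hu
    have hu : (0 : ℝ) < u := hu
    have h2 := (hasDerivAt_const u k).div (hasDerivAt_id u) hu.ne'
    refine (h2.congr_deriv ?_).hasDerivWithinAt
    simp; ring
  have hinj : InjOn (fun u => k / u) (Ioi 0) := by
    intro x hx y hy hxy
    have hx : (0 : ℝ) < x := hx
    have hy : (0 : ℝ) < y := hy
    simp only at hxy
    field_simp at hxy
    linarith
  have himg : (fun u => k / u) '' Ioi 0 = Ioi 0 := by
    ext v
    constructor
    · rintro ⟨u, hu, rfl⟩
      exact div_pos hk0 hu
    · intro hv
      have hv : (0 : ℝ) < v := hv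
      exact ⟨k / v, div_pos hk0 hv, by simp only; field_simp⟩
  have := integral_image_eq_integral_abs_deriv_smul measurableSet_Ioi hd hinj
    (fun u => a / (2 * √u) * Real.exp (-(a * √u - b / √u) ^ 2))
  rw [himg] at this
  rw [this]
  refine setIntegral_congr_fun measurableSet_Ioi fun u hu => ?_
  have hu : (0 : ℝ) < u := hu
  have h4 : 0 < √u := Real.sqrt_pos.mpr hu
  have h3 : √u ^ 2 = u := Real.sq_sqrt hu.le
  simp only [smul_eq_mul, abs_neg, abs_of_pos (div_pos hk0 (pow_pos hu 2)),
    Real.sqrt_div hk0.le, hsk, ← mul_assoc]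
  congr 1
  · rw [hk]; field_simp; rw [h3]
  · congr 1
    field_simp
    ring

theorem laplace_levyDens {t s : ℝ} (ht : 0 < t) (hs : 0 ≤ s) :
    ∫ u in Ioi (0 : ℝ), levyDens t u * Real.exp (-(s * u)) = Real.exp (-(t * √s)) := by
  rcases hs.eq_or_lt with rfl | hs
  · simpa using integral_levyDens ht
  have ha : 0 < √s := Real.sqrt_pos.mpr hs
  have hb : 0 < t / 2 := by positivity
  have hpi : 0 < √π := by positivity
  have e : EqOn (fun u => levyDens t u * Real.exp (-(s * u)))
      (fun u => 2 * Real.exp (-(t * √s)) / √π *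
        (t / 2 / (2 * (u * √u)) * Real.exp (-(√s * √u - t / 2 / √u) ^ 2))) (Ioi 0) := by
    intro u hu
    have hu : (0 : ℝ) < u := hu
    have h4 : 0 < √u := Real.sqrt_pos.mpr hu
    have h3 : √u ^ 2 = u := Real.sq_sqrt hu.le
    have h5 : √s ^ 2 = s := Real.sq_sqrt hs.le
    have h6 : Real.exp (-(t ^ 2 / (4 * u))) * Real.exp (-(s * u)) =
        Real.exp (-(t * √s)) * Real.exp (-(√s * √u - t / 2 / √u) ^ 2) := by
      rw [← Real.exp_add, ← Real.exp_add]
      congr 1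
      nth_rewrite 1 [← h3]
      nth_rewrite 2 [← h3]
      nth_rewrite 1 [← h5]
      field_simp
      ring
    simp only [levyDens]
    rw [show t * Real.exp (-(t ^ 2 / (4 * u))) / (2 * √π * (u * √u)) * Real.exp (-(s * u))
      = t / (2 * √π * (u * √u)) * (Real.exp (-(t ^ 2 / (4 * u))) * Real.exp (-(s * u))) by ring, h6]
    field_simp
  have hB : IntegrableOn (fun u =>
      t / 2 / (2 * (u * √u)) * Real.exp (-(√s * √u - t / 2 / √u) ^ 2)) (Ioi 0) := by
    have h1 : IntegrableOn (fun u => levyDens t u * Real.exp (-(s * u))) (Ioi 0) := by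
      refine (integrableOn_levyDens ht).mul_bdd (c := 1)
        (Continuous.aestronglyMeasurable (by fun_prop)) ?_
      filter_upwards [ae_restrict_mem measurableSet_Ioi] with u hu
      have hu : (0 : ℝ) < u := hu
      rw [Real.norm_eq_abs, Real.abs_exp, Real.exp_le_one_iff, neg_nonpos]
      positivity
    rw [integrableOn_congr_fun e measurableSet_Ioi] at h1
    have hne : 2 * Real.exp (-(t * √s)) / √π ≠ 0 := by positivity
    exact (integrable_const_mul_iff (IsUnit.mk0 _ hne) _).mp h1
  obtain ⟨hI, hS⟩ := cauchy_schlomilch ha hb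
  have hA : IntegrableOn (fun u =>
      √s / (2 * √u) * Real.exp (-(√s * √u - t / 2 / √u) ^ 2)) (Ioi 0) := by
    refine (hI.sub hB).congr (ae_of_all _ fun u => ?_)
    simp only [Pi.sub_apply]; ring
  have hsum : ∫ u in Ioi (0 : ℝ), t / 2 / (2 * (u * √u)) *
      Real.exp (-(√s * √u - t / 2 / √u) ^ 2) = √π / 2 := by
    simp only [add_mul] at hS
    rw [integral_add hA hB, cauchy_schlomilch_symm ha hb] at hS
    linarith
  rw [setIntegral_congr_fun measurableSet_Ioi e, integral_const_mul, hsum]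
  field_simp

/-- The one-sided stable law of index `1/2`. -/
noncomputable def levyMeasure (t : ℝ) : Measure ℝ :=
  (volume.restrict (Ioi 0)).withDensity fun u => ENNReal.ofReal (levyDens t u)

theorem levyMeasure_pos (t : ℝ) : ∀ᵐ u ∂levyMeasure t, 0 < u :=
  (withDensity_absolutelyContinuous _ _).ae_le (ae_restrict_mem measurableSet_Ioi)

theorem integral_levyMeasure {t : ℝ} (ht : 0 < t) (G : ℝ → ℝ) :
    ∫ u, G u ∂levyMeasure t = ∫ u in Ioi (0 : ℝ), levyDens t u * G u := by
  rw [levyMeasure, integral_withDensity_eq_integral_toReal_smul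
    (measurable_levyDens t).ennreal_ofReal (by simp)]
  refine setIntegral_congr_fun measurableSet_Ioi fun u hu => ?_
  simp [ENNReal.toReal_ofReal (levyDens_nonneg ht hu)]

theorem isProbabilityMeasure_levyMeasure {t : ℝ} (ht : 0 < t) :
    IsProbabilityMeasure (levyMeasure t) := by
  refine ⟨?_⟩
  rw [levyMeasure, withDensity_apply _ MeasurableSet.univ, Measure.restrict_univ,
    ← ofReal_integral_eq_lintegral_ofReal (integrableOn_levyDens ht), integral_levyDens ht,
    ENNReal.ofReal_one]
  filter_upwards [ae_restrict_mem measurableSet_Ioi] with u hu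
  exact levyDens_nonneg ht hu

theorem levyMeasure_conv {t s : ℝ} (ht : 0 < t) (hs : 0 < s) :
    (levyMeasure t).conv (levyMeasure s) = levyMeasure (t + s) := by
  have := isProbabilityMeasure_levyMeasure ht
  have := isProbabilityMeasure_levyMeasure hs
  have := isProbabilityMeasure_levyMeasure (add_pos ht hs)
  have hadd : Measurable fun p : ℝ × ℝ => p.1 + p.2 := by fun_prop
  refine Measure.ext_of_laplace_real ?_ ((levyMeasure_pos _).mono fun u hu => hu.le) ?_
  · rw [Measure.conv, ae_map_iff hadd.aemeasurable (measurableSet_le (by fun_prop) (by fun_prop))]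
    filter_upwards [Measure.quasiMeasurePreserving_fst.ae (levyMeasure_pos t),
      Measure.quasiMeasurePreserving_snd.ae (levyMeasure_pos s)] with p h1 h2
    positivity
  · intro l hl
    rw [Measure.conv, integral_map hadd.aemeasurable
      (Continuous.aestronglyMeasurable (by fun_prop))]
    simp only [mul_add, neg_add, Real.exp_add]
    rw [integral_prod_mul (fun u => Real.exp (-(l * u))) (fun u => Real.exp (-(l * u))),
      integral_levyMeasure ht, integral_levyMeasure hs, integral_levyMeasure (add_pos ht hs),
      laplace_levyDens ht hl, laplace_levyDens hs hl, laplace_levyDens (add_pos ht hs) hl,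
      ← Real.exp_add]
    congr 1; ring

/-- The convolution semigroup property of the densities, tested on a bounded function. -/
theorem integral_levyDens_convolution {t s M : ℝ} (ht : 0 < t) (hs : 0 < s) {G : ℝ → ℝ}
    (hG : Measurable G) (hM : ∀ u > 0, |G u| ≤ M) :
    ∫ u in Ioi (0 : ℝ), levyDens t u * ∫ v in Ioi (0 : ℝ), levyDens s v * G (u + v)
      = ∫ w in Ioi (0 : ℝ), levyDens (t + s) w * G w := by
  have := isProbabilityMeasure_levyMeasure ht
  have := isProbabilityMeasure_levyMeasure hs
  have hadd : Measurable fun p : ℝ × ℝ => p.1 + p.2 := by fun_prop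
  rw [← integral_levyMeasure (add_pos ht hs), ← levyMeasure_conv ht hs, Measure.conv,
    integral_map hadd.aemeasurable hG.aestronglyMeasurable, integral_prod,
    integral_levyMeasure ht]
  · simp only [integral_levyMeasure hs]
  · refine Integrable.of_bound (hG.comp hadd).aestronglyMeasurable M ?_
    filter_upwards [Measure.quasiMeasurePreserving_fst.ae (levyMeasure_pos t),
      Measure.quasiMeasurePreserving_snd.ae (levyMeasure_pos s)] with p h1 h2
    exact hM _ (add_pos h1 h2)

theorem hasDerivAt_levyDens {t : ℝ} (ht : 0 < t) {u : ℝ} (hu : 0 < u) :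
    HasDerivAt (fun t => levyDens t u) ((1 / t - t / (2 * u)) * levyDens t u) t := by
  have h1 : HasDerivAt (fun t : ℝ => -(t ^ 2 / (4 * u))) (-(2 * t / (4 * u))) t := by
    have h0 := ((hasDerivAt_pow 2 t).div_const (4 * u)).fun_neg
    exact h0.congr_deriv (by simp)
  have h2 := ((hasDerivAt_id t).mul h1.exp).div_const (2 * √π * (u * √u))
  refine h2.congr_deriv ?_
  simp only [levyDens, id]
  field_simp
  ring

theorem integrableOn_levyDens_deriv_bound {t : ℝ} (ht : 0 < t) (c : ℝ) :
    IntegrableOn (fun u => (1 / t + c / u) * levyDens t u) (Ioi 0) := by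
  refine (((integrableOn_levyDens ht).const_mul (1 / t)).add
    ((integrableOn_levyDens_div ht).const_mul c)).congr (ae_of_all _ fun u => ?_)
  simp only [Pi.add_apply]; ring

/-- The subordinated average of a bounded function is differentiable, with derivative `O(1/t)`. -/
theorem hasDerivAt_integral_levyDens {t M : ℝ} (ht : 0 < t) {G : ℝ → ℝ}
    (hG : Measurable G) (hM : ∀ u > 0, |G u| ≤ M) :
    ∃ D, HasDerivAt (fun t => ∫ u in Ioi (0 : ℝ), levyDens t u * G u) D t ∧ |D| ≤ 2 * M / t := by
  have hM0 : 0 ≤ M := (abs_nonneg _).trans (hM 1 one_pos)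
  have hnear : Metric.ball t (t / 2) ∈ nhds t := Metric.ball_mem_nhds _ (by positivity)
  have key := hasDerivAt_integral_of_dominated_loc_of_deriv_le
    (μ := volume.restrict (Ioi (0 : ℝ))) (F := fun t u => levyDens t u * G u)
    (F' := fun t u => (1 / t - t / (2 * u)) * levyDens t u * G u) (x₀ := t)
    (bound := fun u => 3 * M * ((1 / (t / 2) + t / u) * levyDens (t / 2) u)) hnear
    (Filter.Eventually.of_forall fun τ =>
      ((measurable_levyDens τ).mul hG).aestronglyMeasurable)
    ((integrableOn_levyDens ht).mul_bdd hG.aestronglyMeasurable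
      (by filter_upwards [ae_restrict_mem measurableSet_Ioi] with u hu using hM u hu))
    (Measurable.aestronglyMeasurable (by
      have := measurable_levyDens t
      fun_prop)) ?_
    ((integrableOn_levyDens_deriv_bound (half_pos ht) t).const_mul (3 * M)) ?_
  · refine ⟨_, key.2, ?_⟩
    have hb : IntegrableOn (fun u => M * ((1 / t + t / 2 / u) * levyDens t u)) (Ioi 0) :=
      (integrableOn_levyDens_deriv_bound ht (t / 2)).const_mul M
    rw [← Real.norm_eq_abs]
    refine (norm_integral_le_of_norm_le hb ?_).trans_eq ?_
    · filter_upwards [ae_restrict_mem measurableSet_Ioi] with u hu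
      have hu : (0 : ℝ) < u := hu
      have h0 := levyDens_nonneg ht hu
      rw [norm_mul, norm_mul, Real.norm_of_nonneg h0, mul_comm M]
      refine mul_le_mul ?_ (hM u hu) (norm_nonneg _) (by positivity)
      gcongr
      refine (norm_sub_le _ _).trans_eq ?_
      rw [Real.norm_of_nonneg (by positivity), Real.norm_of_nonneg (by positivity)]
      field_simp
    · rw [integral_const_mul]
      have : ∀ u, (1 / t + t / 2 / u) * levyDens t u
          = 1 / t * levyDens t u + t / 2 * (levyDens t u / u) := fun u => by ring
      simp only [this]
      rw [integral_add ((integrableOn_levyDens ht).const_mul _)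
        ((integrableOn_levyDens_div ht).const_mul _), integral_const_mul, integral_const_mul,
        integral_levyDens ht, integral_levyDens_div ht]
      field_simp
      norm_num
  · filter_upwards [ae_restrict_mem measurableSet_Ioi] with u hu τ hτ
    have hu : (0 : ℝ) < u := hu
    rw [Metric.mem_ball, Real.dist_eq, abs_lt] at hτ
    have hτ1 : t / 2 < τ := by linarith
    have hτ2 : τ < 2 * t := by linarith
    have hτ3 : τ < 3 * (t / 2) := by linarith
    have hτ0 : 0 < τ := by linarith
    have h0 := levyDens_nonneg hτ0 hu
    have hc : levyDens τ u ≤ 3 * levyDens (t / 2) u := by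
      have : Real.exp (-(τ ^ 2 / (4 * u))) ≤ Real.exp (-((t / 2) ^ 2 / (4 * u))) := by gcongr
      unfold levyDens
      rw [← mul_div_assoc, ← mul_assoc 3 (t / 2)]
      gcongr
    rw [norm_mul, norm_mul, Real.norm_of_nonneg h0]
    have h1 : ‖1 / τ - τ / (2 * u)‖ ≤ 1 / (t / 2) + t / u := by
      refine (norm_sub_le _ _).trans ?_
      rw [Real.norm_of_nonneg (by positivity), Real.norm_of_nonneg (by positivity)]
      have h2 : τ / (2 * u) ≤ t / u := by
        rw [div_le_div_iff₀ (by positivity) hu]; nlinarith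
      have h3 : 1 / τ ≤ 1 / (t / 2) := by gcongr
      linarith
    calc ‖1 / τ - τ / (2 * u)‖ * levyDens τ u * ‖G u‖
        ≤ (1 / (t / 2) + t / u) * (3 * levyDens (t / 2) u) * M := by
          have h4 := levyDens_nonneg (half_pos ht) hu
          gcongr
          exact hM u hu
      _ = _ := by ring
  · filter_upwards [ae_restrict_mem measurableSet_Ioi] with u hu τ hτ
    rw [Metric.mem_ball, Real.dist_eq, abs_lt] at hτ
    exact (hasDerivAt_levyDens (by linarith) hu).mul_const _

/-- The stable laws concentrate at the origin as `t → 0`. -/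
theorem tendsto_integral_levyDens {M L : ℝ} {G : ℝ → ℝ}
    (hG : Measurable G) (hM : ∀ u > 0, |G u| ≤ M)
    (hL : Filter.Tendsto G (nhdsWithin 0 (Ioi 0)) (nhds L)) :
    Filter.Tendsto (fun t => ∫ u in Ioi (0 : ℝ), levyDens t u * G u) (nhdsWithin 0 (Ioi 0))
      (nhds L) := by
  have scale : ∀ t > 0, ∫ u in Ioi (0 : ℝ), levyDens t u * G u
      = ∫ v in Ioi (0 : ℝ), levyDens 1 v * G (t ^ 2 * v) := by
    intro t ht
    have h := integral_comp_mul_left_Ioi (fun u => levyDens t u * G u) 0 (pow_pos ht 2)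
    rw [mul_zero, eq_comm, inv_smul_eq_iff₀ (by positivity)] at h
    rw [h, ← integral_smul]
    refine setIntegral_congr_fun measurableSet_Ioi fun v hv => ?_
    have hv : (0 : ℝ) < v := hv
    simp only [levyDens, smul_eq_mul, ← mul_assoc]
    congr 1
    rw [Real.sqrt_mul (by positivity), Real.sqrt_sq ht.le,
      show t ^ 2 / (4 * t ^ 2 * v) = 1 ^ 2 / (4 * v) by field_simp]
    field_simp
  have lim : Filter.Tendsto (fun t => ∫ v in Ioi (0 : ℝ), levyDens 1 v * G (t ^ 2 * v))
      (nhdsWithin 0 (Ioi 0)) (nhds (∫ v in Ioi (0 : ℝ), levyDens 1 v * L)) := by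
    refine tendsto_integral_filter_of_dominated_convergence (fun v => M * levyDens 1 v)
      (Filter.Eventually.of_forall fun t => Measurable.aestronglyMeasurable (by
        have := measurable_levyDens 1
        fun_prop)) ?_ ((integrableOn_levyDens one_pos).const_mul M) ?_
    · filter_upwards [self_mem_nhdsWithin] with t ht
      have ht : (0 : ℝ) < t := ht
      filter_upwards [ae_restrict_mem measurableSet_Ioi] with v hv
      have hv : (0 : ℝ) < v := hv
      rw [norm_mul, Real.norm_of_nonneg (levyDens_nonneg one_pos hv), mul_comm]
      exact mul_le_mul_of_nonneg_right (hM _ (by positivity)) (levyDens_nonneg one_pos hv)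
    · filter_upwards [ae_restrict_mem measurableSet_Ioi] with v hv
      have hv : (0 : ℝ) < v := hv
      refine (hL.comp ?_).const_mul _
      refine tendsto_nhdsWithin_iff.mpr ⟨?_, ?_⟩
      · have : ContinuousAt (fun t : ℝ => t ^ 2 * v) 0 := by fun_prop
        have h2 := this.tendsto
        simp only [ne_eq, OfNat.ofNat_ne_zero, not_false_eq_true, zero_pow, zero_mul] at h2
        exact h2.mono_left nhdsWithin_le_nhds
      · filter_upwards [self_mem_nhdsWithin] with t ht
        have ht : (0 : ℝ) < t := ht
        exact mul_pos (pow_pos ht 2) hv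
  rw [integral_mul_const, integral_levyDens one_pos, one_mul] at lim
  refine lim.congr' ?_
  filter_upwards [self_mem_nhdsWithin] with t ht using (scale t ht).symm

/-- The `m`-th term of the expansion of the one-dimensional Laguerre heat kernel as a mixture of
Gamma densities with Poisson weights. -/
noncomputable def lagTerm (a r : ℝ) (m : ℕ) (x y : ℝ) : ℝ :=
  Real.exp (-(r * |x| / (1 - r))) * (r * |x| / (1 - r)) ^ m / m.factorial *
    (y ^ ((m : ℝ) + a) * Real.exp (-(y / (1 - r))) /
      ((1 - r) ^ ((m : ℝ) + a + 1) * Real.Gamma ((m : ℝ) + a + 1)))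

/-- The one-dimensional Laguerre heat kernel with values in `ℝ≥0∞`. -/
noncomputable def lagKerE (a r x y : ℝ) : ENNReal := ∑' m, ENNReal.ofReal (lagTerm a r m x y)

/-- The one-dimensional Laguerre heat kernel. -/
noncomputable def lagKer (a r x y : ℝ) : ℝ := (lagKerE a r x y).toReal

/-- The Laplace transform of the one-dimensional Laguerre heat kernel. -/
noncomputable def lagLap (a r s X : ℝ) : ℝ :=
  (1 / (1 + s * (1 - r))) ^ (a + 1) * Real.exp (-(s * r * X / (1 + s * (1 - r))))

theorem Measurable.lagKerE {Ω : Type*} [MeasurableSpace Ω] {f g h : Ω → ℝ} (hf : Measurable f)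
    (hg : Measurable g) (hh : Measurable h) (a : ℝ) :
    Measurable fun ω => lagKerE a (f ω) (g ω) (h ω) := by
  unfold _root_.lagKerE
  refine Measurable.tsum fun m => Measurable.ennreal_ofReal ?_
  unfold lagTerm
  fun_prop

theorem Measurable.lagKer {Ω : Type*} [MeasurableSpace Ω] {f g h : Ω → ℝ} (hf : Measurable f)
    (hg : Measurable g) (hh : Measurable h) (a : ℝ) :
    Measurable fun ω => lagKer a (f ω) (g ω) (h ω) :=
  (hf.lagKerE hg hh a).ennreal_toReal

theorem lagKer_nonneg (a r x y : ℝ) : 0 ≤ lagKer a r x y := ENNReal.toReal_nonneg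

theorem lagTerm_nonneg {a r : ℝ} (ha : -1 < a) (hr0 : 0 < r) (hr1 : r < 1) (m : ℕ) (x : ℝ) {y : ℝ}
    (hy : 0 < y) : 0 ≤ lagTerm a r m x y := by
  have h1 : 0 < 1 - r := by linarith
  have hm : (0 : ℝ) ≤ m := m.cast_nonneg
  have : 0 < Real.Gamma ((m : ℝ) + a + 1) := Real.Gamma_pos_of_pos (by linarith)
  unfold lagTerm
  positivity

theorem lagKer_eq_tsum {a r : ℝ} (ha : -1 < a) (hr0 : 0 < r) (hr1 : r < 1) (x : ℝ) {y : ℝ}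
    (hy : 0 < y) : lagKer a r x y = ∑' m, lagTerm a r m x y := by
  rw [lagKer, lagKerE, ENNReal.tsum_toReal_eq (by simp)]
  exact tsum_congr fun m => ENNReal.toReal_ofReal (lagTerm_nonneg ha hr0 hr1 m x hy)

theorem lintegral_lagTerm_mul_exp {a r s : ℝ} (ha : -1 < a) (hr0 : 0 < r) (hr1 : r < 1)
    (hs : 0 ≤ s) (m : ℕ) (x : ℝ) :
    ∫⁻ y in Ioi (0 : ℝ), ENNReal.ofReal (lagTerm a r m x y) * ENNReal.ofReal (Real.exp (-(s * y)))
      = ENNReal.ofReal ((1 / (1 + s * (1 - r))) ^ (a + 1) * Real.exp (-(r * |x| / (1 - r))) *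
        ((r * |x| / (1 - r) / (1 + s * (1 - r))) ^ m / m.factorial)) := by
  have hc : 0 < 1 - r := by linarith
  have hm : (0 : ℝ) ≤ m := m.cast_nonneg
  have hG : 0 < Real.Gamma ((m : ℝ) + a + 1) := Real.Gamma_pos_of_pos (by linarith)
  have hsc : 0 < 1 + s * (1 - r) := by positivity
  have hb : 0 < 1 / (1 - r) + s := by positivity
  set K := Real.exp (-(r * |x| / (1 - r))) * (r * |x| / (1 - r)) ^ m / m.factorial /
      ((1 - r) ^ ((m : ℝ) + a + 1) * Real.Gamma ((m : ℝ) + a + 1)) with hK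
  have hK0 : 0 ≤ K := by positivity
  have e : EqOn (fun y => ENNReal.ofReal (lagTerm a r m x y) *
      ENNReal.ofReal (Real.exp (-(s * y))))
      (fun y => ENNReal.ofReal (K * (y ^ ((m : ℝ) + a + 1 - 1) *
        Real.exp (-((1 / (1 - r) + s) * y))))) (Ioi 0) := by
    intro y hy
    simp only
    rw [← ENNReal.ofReal_mul (lagTerm_nonneg ha hr0 hr1 m x hy),
      show -((1 / (1 - r) + s) * y) = -(y / (1 - r)) + -(s * y) by ring, Real.exp_add,
      add_sub_cancel_right, hK, lagTerm]
    congr 1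
    ring
  have hint : IntegrableOn (fun y : ℝ => y ^ ((m : ℝ) + a + 1 - 1) *
        Real.exp (-((1 / (1 - r) + s) * y))) (Ioi 0) := by
    have := integrableOn_rpow_mul_exp_neg_mul_rpow (s := (m : ℝ) + a + 1 - 1) (p := 1)
      (b := 1 / (1 - r) + s) (by linarith) one_pos hb
    refine this.congr_fun (fun y _ => ?_) measurableSet_Ioi
    simp only [Real.rpow_one, neg_mul]
  rw [setLIntegral_congr_fun measurableSet_Ioi e,
    ← ofReal_integral_eq_lintegral_ofReal (hint.const_mul K), integral_const_mul,
    Real.integral_rpow_mul_exp_neg_mul_Ioi (by linarith) hb]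
  · congr 1
    rw [show 1 / (1 / (1 - r) + s) = (1 - r) * (1 / (1 + s * (1 - r))) by field_simp,
      Real.mul_rpow hc.le (by positivity), show (m : ℝ) + a + 1 = (a + 1) + m by ring,
      Real.rpow_add_natCast (by positivity : 1 / (1 + s * (1 - r)) ≠ 0), hK,
      show (m : ℝ) + a + 1 = (a + 1) + m by ring]
    have h1 : (1 - r) ^ (a + 1 + (m : ℝ)) ≠ 0 := by positivity
    have h2 : Real.Gamma (a + 1 + m) ≠ 0 := by
      rw [show (a + 1 + (m : ℝ)) = (m : ℝ) + a + 1 by ring]; exact hG.ne'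
    simp only [div_pow, one_pow]
    field_simp
  · filter_upwards [ae_restrict_mem measurableSet_Ioi] with y hy
    have hy : (0 : ℝ) < y := hy
    simp only [Pi.zero_apply]
    positivity

theorem lintegral_lagKerE_mul_exp {a r s : ℝ} (ha : -1 < a) (hr0 : 0 < r) (hr1 : r < 1)
    (hs : 0 ≤ s) (x : ℝ) :
    ∫⁻ y in Ioi (0 : ℝ), lagKerE a r x y * ENNReal.ofReal (Real.exp (-(s * y)))
      = ENNReal.ofReal (lagLap a r s |x|) := by
  have hc : 0 < 1 - r := by linarith
  have hsc : 0 < 1 + s * (1 - r) := by positivity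
  simp only [lagKerE, ← ENNReal.tsum_mul_right]
  rw [lintegral_tsum]
  · simp only [lintegral_lagTerm_mul_exp ha hr0 hr1 hs]
    have hsum := (NormedSpace.expSeries_div_hasSum_exp
      (r * |x| / (1 - r) / (1 + s * (1 - r)))).mul_left
        ((1 / (1 + s * (1 - r))) ^ (a + 1) * Real.exp (-(r * |x| / (1 - r))))
    rw [← ENNReal.ofReal_tsum_of_nonneg (fun m => by positivity) hsum.summable, hsum.tsum_eq,
      ← Real.exp_eq_exp_ℝ, mul_assoc, ← Real.exp_add, lagLap]
    congr 3
    field_simp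
    ring
  · intro m
    refine Measurable.aemeasurable ?_
    unfold lagTerm
    fun_prop

theorem integral_lagKer_mul_exp {a r s : ℝ} (ha : -1 < a) (hr0 : 0 < r) (hr1 : r < 1)
    (hs : 0 ≤ s) (x : ℝ) :
    IntegrableOn (fun y => lagKer a r x y * Real.exp (-(s * y))) (Ioi 0) ∧
    ∫ y in Ioi (0 : ℝ), lagKer a r x y * Real.exp (-(s * y)) = lagLap a r s |x| := by
  have hc : 0 < 1 - r := by linarith
  have hsc : 0 < 1 + s * (1 - r) := by positivity
  have hE := lintegral_lagKerE_mul_exp ha hr0 hr1 hs x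
  have mE : Measurable fun y => lagKerE a r x y * ENNReal.ofReal (Real.exp (-(s * y))) := by
    have : Measurable fun y => lagKerE a r x y :=
      measurable_const.lagKerE measurable_const measurable_id a
    exact this.mul (Measurable.ennreal_ofReal (by fun_prop))
  have e : (fun y => lagKer a r x y * Real.exp (-(s * y)))
      = fun y => (lagKerE a r x y * ENNReal.ofReal (Real.exp (-(s * y)))).toReal := by
    ext y
    rw [ENNReal.toReal_mul, ENNReal.toReal_ofReal (Real.exp_pos _).le, lagKer]
  have hfin : ∫⁻ y in Ioi (0 : ℝ), lagKerE a r x y * ENNReal.ofReal (Real.exp (-(s * y))) ≠ ⊤ := by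
    rw [hE]; exact ENNReal.ofReal_ne_top
  rw [e]
  refine ⟨integrable_toReal_of_lintegral_ne_top mE.aemeasurable hfin, ?_⟩
  rw [integral_toReal mE.aemeasurable (ae_lt_top mE hfin), hE, ENNReal.toReal_ofReal]
  unfold lagLap; positivity

theorem bessel_term_eq {a r c x y : ℝ} (hr : 0 < r) (hc : 0 < c) (hx : 0 < x) (hy : 0 < y)
    (m : ℕ) (N : ℝ) :
    (y / x) ^ (a / 2) * Real.exp (-((r * x + y) / c) - a * Real.log r / 2) *
      ((2 * √(r * x * y) / c / 2) ^ (2 * (m : ℝ) + a) / N)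
    = c * (Real.exp (-(r * x / c)) * (r * x / c) ^ m *
      (y ^ ((m : ℝ) + a) * Real.exp (-(y / c)) / (c ^ ((m : ℝ) + a + 1) * N))) := by
  have hrx : r * x / c = Real.exp (Real.log r + Real.log x - Real.log c) := by
    rw [Real.exp_sub, Real.exp_add, Real.exp_log hr, Real.exp_log hx, Real.exp_log hc]
  have hsq : 2 * √(r * x * y) / c / 2
      = Real.exp ((Real.log r + Real.log x + Real.log y) / 2 - Real.log c) := by
    rw [Real.exp_sub, Real.exp_half, Real.exp_add, Real.exp_add, Real.exp_log hr, Real.exp_log hx,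
      Real.exp_log hc, Real.exp_log hy]
    ring
  have hyx : y / x = Real.exp (Real.log y - Real.log x) := by
    rw [Real.exp_sub, Real.exp_log hx, Real.exp_log hy]
  have e1 : (y / x) ^ (a / 2) * Real.exp (-((r * x + y) / c) - a * Real.log r / 2) *
      (2 * √(r * x * y) / c / 2) ^ (2 * (m : ℝ) + a)
      = c * (Real.exp (-(r * x / c)) * (r * x / c) ^ m *
      (y ^ ((m : ℝ) + a) * Real.exp (-(y / c)) / c ^ ((m : ℝ) + a + 1))) := by
    rw [hsq, hyx, ← Real.exp_mul, ← Real.exp_mul, add_div, Real.rpow_def_of_pos hy,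
      Real.rpow_def_of_pos hc, ← Real.exp_add, ← Real.exp_add]
    rw [← Real.exp_add (Real.log y * _), ← Real.exp_sub]
    have hpow : (r * x / c) ^ m
        = Real.exp (m * (Real.log r + Real.log x - Real.log c)) := by
      rw [Real.exp_nat_mul, ← hrx]
    rw [hpow, ← Real.exp_add, ← Real.exp_add]
    have hcm : ∀ Z, c * Real.exp Z = Real.exp (Real.log c + Z) := fun Z => by
      rw [Real.exp_add, Real.exp_log hc]
    rw [hcm]
    congr 1
    ring
  rw [← mul_div_assoc, e1]
  rw [mul_div_assoc, mul_div_assoc, div_div]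

theorem besselI_eq_lagKer {a r x y : ℝ} (ha : -1 < a) (hr0 : 0 < r) (hr1 : r < 1) (hx : 0 < x)
    (hy : 0 < y) :
    (y / x) ^ (a / 2) * Real.exp (-((r * x + y) / (1 - r)) - a * Real.log r / 2) *
      besselI a (2 * √(r * x * y) / (1 - r)) = (1 - r) * lagKer a r x y := by
  have hc : 0 < 1 - r := by linarith
  rw [lagKer_eq_tsum ha hr0 hr1 x hy, besselI, ← tsum_mul_left, ← tsum_mul_left]
  refine tsum_congr fun m => ?_
  rw [bessel_term_eq hr0 hc hx hy, lagTerm, abs_of_pos hx]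
  field_simp

theorem lagKer_symm {a r x y : ℝ} (ha : -1 < a) (hr0 : 0 < r) (hr1 : r < 1) (hx : 0 < x)
    (hy : 0 < y) :
    x ^ a * Real.exp (-x) * lagKer a r x y = y ^ a * Real.exp (-y) * lagKer a r y x := by
  have hc : 0 < 1 - r := by linarith
  rw [lagKer_eq_tsum ha hr0 hr1 x hy, lagKer_eq_tsum ha hr0 hr1 y hx, ← tsum_mul_left,
    ← tsum_mul_left]
  refine tsum_congr fun m => ?_
  have hexp : ∀ x : ℝ, Real.exp (-x) * Real.exp (-(r * x / (1 - r))) =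
      Real.exp (-(x / (1 - r))) := by
    intro x
    rw [← Real.exp_add]; congr 1; field_simp; ring
  rw [lagTerm, lagTerm, abs_of_pos hx, abs_of_pos hy, ← hexp x, ← hexp y, add_comm (m : ℝ) a,
    Real.rpow_add_natCast hx.ne', Real.rpow_add_natCast hy.ne']
  simp only [div_pow, mul_pow]
  ring

theorem integrable_uncurry_mul_kernel {X Y : Type*} [MeasurableSpace X] [MeasurableSpace Y]
    {μ : Measure X} {ν : Measure Y} [SFinite μ] [SFinite ν] {a : X → ℝ} {k g : X → Y → ℝ} {M : ℝ}
    (ha : Integrable a μ) (mk : Measurable (Function.uncurry k))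
    (mg : Measurable (Function.uncurry g))
    (hk : ∀ᵐ x ∂μ, (∀ᵐ y ∂ν, 0 ≤ k x y) ∧ Integrable (k x) ν ∧ ∫ y, k x y ∂ν = 1)
    (hg : ∀ᵐ x ∂μ, ∀ᵐ y ∂ν, |g x y| ≤ M) :
    Integrable (Function.uncurry fun x y => a x * (k x y * g x y)) (μ.prod ν) := by
  have hm : AEStronglyMeasurable (Function.uncurry fun x y => a x * (k x y * g x y))
      (μ.prod ν) :=
    ha.1.comp_fst.mul (mk.mul mg).aestronglyMeasurable
  refine (integrable_prod_iff hm).2 ⟨?_, ?_⟩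
  · filter_upwards [hk, hg] with x hx hgx
    have m2 : Measurable (g x) := mg.comp measurable_prodMk_left
    exact (hx.2.1.mul_bdd m2.aestronglyMeasurable hgx).const_mul (a x)
  · refine (ha.norm.mul_const M).mono' hm.norm.integral_prod_right' ?_
    filter_upwards [hk, hg] with x hx hgx
    rw [Real.norm_of_nonneg (integral_nonneg fun _ => norm_nonneg _)]
    calc ∫ y, ‖Function.uncurry (fun x y => a x * (k x y * g x y)) (x, y)‖ ∂ν
        ≤ ∫ y, ‖a x‖ * M * k x y ∂ν := by
          refine integral_mono_of_nonneg (ae_of_all _ fun _ => norm_nonneg _)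
            (hx.2.1.const_mul _) ?_
          filter_upwards [hx.1, hgx] with y h1 h2
          simp only [Function.uncurry_apply_pair, norm_mul, Real.norm_eq_abs, abs_of_nonneg h1]
          nlinarith [mul_le_mul_of_nonneg_left h2 (mul_nonneg (abs_nonneg (a x)) h1)]
      _ = ‖a x‖ * M := by rw [integral_const_mul, hx.2.2, mul_one]

theorem abs_integral_kernel_mul_le {Y : Type*} [MeasurableSpace Y] {ν : Measure Y} {k g : Y → ℝ}
    {M : ℝ} (h0 : ∀ᵐ y ∂ν, 0 ≤ k y) (hi : Integrable k ν) (h1 : ∫ y, k y ∂ν = 1)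
    (hg : ∀ᵐ y ∂ν, |g y| ≤ M) : |∫ y, k y * g y ∂ν| ≤ M := by
  calc |∫ y, k y * g y ∂ν| ≤ ∫ y, M * k y ∂ν := by
        refine (Real.norm_eq_abs _).ge.trans (norm_integral_le_of_norm_le (hi.const_mul M) ?_)
        filter_upwards [h0, hg] with y a b
        rw [Real.norm_eq_abs, abs_mul, abs_of_nonneg a, mul_comm]
        exact mul_le_mul_of_nonneg_right b a
    _ = M := by rw [integral_const_mul, h1, mul_one]

theorem lagLap_comp {a r r' s X : ℝ} (hr0 : 0 < r) (hr1 : r < 1) (hr0' : 0 < r') (hr1' : r' < 1)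
    (hs : 0 ≤ s) :
    (1 / (1 + s * (1 - r'))) ^ (a + 1) * lagLap a r (s * r' / (1 + s * (1 - r'))) X
      = lagLap a (r * r') s X := by
  have h1 : 0 < 1 - r' := by linarith
  have h2 : 0 < 1 - r := by linarith
  have h3 : 0 < 1 + s * (1 - r') := by positivity
  have h4 : 0 < 1 + s * (1 - r * r') := by nlinarith [mul_nonneg hs h2.le, mul_nonneg hs h1.le]
  have e : 1 + s * r' / (1 + s * (1 - r')) * (1 - r)
      = (1 + s * (1 - r * r')) / (1 + s * (1 - r')) := by
    field_simp; ring
  unfold lagLap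
  rw [e, ← mul_assoc, ← Real.mul_rpow (by positivity) (by positivity)]
  congr 2
  · field_simp
  · congr 1; field_simp

theorem measurableSet_posOrthant (d : ℕ) : MeasurableSet (posOrthant d) :=
  MeasurableSet.pi countable_univ fun _ _ => measurableSet_Ioi

theorem volume_restrict_posOrthant (d : ℕ) :
    (volume : Measure (Fin d → ℝ)).restrict (posOrthant d)
      = Measure.pi fun _ => volume.restrict (Ioi 0) := by
  rw [volume_pi, posOrthant, Measure.restrict_pi_pi]

theorem ae_posOrthant_nonneg (d : ℕ) :
    ∀ᵐ y ∂(volume : Measure (Fin d → ℝ)).restrict (posOrthant d), ∀ j, 0 ≤ y j := by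
  filter_upwards [ae_restrict_mem (measurableSet_posOrthant d)] with y hy j
  exact (hy j (mem_univ j)).le

section Heat

variable {d : ℕ} {α : Fin d → ℝ}

/-- The Laguerre heat kernel on the orthant. -/
noncomputable def heatK (α : Fin d → ℝ) (u : ℝ) (x y : Fin d → ℝ) : ℝ :=
  ∏ j, lagKer (α j) (Real.exp (-u)) (x j) (y j)

/-- The Laguerre heat semigroup. -/
noncomputable def heatSG (α : Fin d → ℝ) (u : ℝ) (f : (Fin d → ℝ) → ℝ) (x : Fin d → ℝ) : ℝ :=
  ∫ y in posOrthant d, heatK α u x y * f y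

theorem heatK_nonneg (α : Fin d → ℝ) (u : ℝ) (x y : Fin d → ℝ) : 0 ≤ heatK α u x y :=
  Finset.prod_nonneg fun _ _ => lagKer_nonneg _ _ _ _

theorem Measurable.heatK {Ω : Type*} [MeasurableSpace Ω] {u : Ω → ℝ} {x y : Ω → Fin d → ℝ}
    (hu : Measurable u) (hx : Measurable x) (hy : Measurable y) (α : Fin d → ℝ) :
    Measurable fun ω => heatK α (u ω) (x ω) (y ω) := by
  unfold _root_.heatK
  refine Finset.measurable_fun_prod _ fun j _ => Measurable.lagKer ?_ ?_ ?_ _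
  · exact (hu.neg).exp
  · exact (measurable_pi_apply j).comp hx
  · exact (measurable_pi_apply j).comp hy

theorem exp_neg_mem {u : ℝ} (hu : 0 < u) : 0 < Real.exp (-u) ∧ Real.exp (-u) < 1 :=
  ⟨Real.exp_pos _, Real.exp_lt_one_iff.2 (by linarith)⟩

theorem heatK_mul_exp (α : Fin d → ℝ) (u : ℝ) (x y s : Fin d → ℝ) :
    heatK α u x y * Real.exp (-∑ j, s j * y j)
      = ∏ j, lagKer (α j) (Real.exp (-u)) (x j) (y j) * Real.exp (-(s j * y j)) := by
  rw [heatK, Finset.prod_mul_distrib, ← Finset.sum_neg_distrib, Real.exp_sum]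

theorem integral_heatK_mul_exp (hα : ∀ j, -1 < α j) {u : ℝ} (hu : 0 < u) (x : Fin d → ℝ)
    {s : Fin d → ℝ} (hs : ∀ j, 0 ≤ s j) :
    ∫ y in posOrthant d, heatK α u x y * Real.exp (-∑ j, s j * y j)
      = ∏ j, lagLap (α j) (Real.exp (-u)) (s j) |x j| := by
  simp only [heatK_mul_exp, volume_restrict_posOrthant]
  rw [integral_fintype_prod_eq_prod
    (fun j z => lagKer (α j) (Real.exp (-u)) (x j) z * Real.exp (-(s j * z)))]
  exact Finset.prod_congr rfl fun j _ =>
    (integral_lagKer_mul_exp (hα j) (exp_neg_mem hu).1 (exp_neg_mem hu).2 (hs j) (x j)).2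

theorem integrable_heatK (hα : ∀ j, -1 < α j) {u : ℝ} (hu : 0 < u) (x : Fin d → ℝ) :
    IntegrableOn (heatK α u x) (posOrthant d) := by
  rw [IntegrableOn, volume_restrict_posOrthant]
  refine Integrable.fintype_prod (f := fun j z => lagKer (α j) (Real.exp (-u)) (x j) z) fun j => ?_
  have := (integral_lagKer_mul_exp (hα j) (exp_neg_mem hu).1 (exp_neg_mem hu).2 le_rfl (x j)).1
  simpa [IntegrableOn] using this

theorem integral_heatK (hα : ∀ j, -1 < α j) {u : ℝ} (hu : 0 < u) (x : Fin d → ℝ) :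
    ∫ y in posOrthant d, heatK α u x y = 1 := by
  simpa [lagLap] using integral_heatK_mul_exp hα hu x (s := 0) fun _ => le_rfl

theorem abs_heatSG_le (hα : ∀ j, -1 < α j) {u M : ℝ} (hu : 0 < u) {f : (Fin d → ℝ) → ℝ}
    (hM : ∀ y, |f y| ≤ M) (x : Fin d → ℝ) : |heatSG α u f x| ≤ M :=
  abs_integral_kernel_mul_le (ae_of_all _ fun _ => heatK_nonneg _ _ _ _) (integrable_heatK hα hu x)
    (integral_heatK hα hu x) (ae_of_all _ hM)

theorem Measurable.heatSG {Ω : Type*} [MeasurableSpace Ω] {u : Ω → ℝ} {x : Ω → Fin d → ℝ}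
    (hu : Measurable u) (hx : Measurable x) (α : Fin d → ℝ) {f : (Fin d → ℝ) → ℝ}
    (hf : Measurable f) : Measurable fun ω => heatSG α (u ω) f (x ω) := by
  unfold _root_.heatSG
  refine (StronglyMeasurable.integral_prod_right (f := fun (ω : Ω) y =>
    _root_.heatK α (u ω) (x ω) y * f y) (Measurable.stronglyMeasurable ?_)).measurable
  exact ((hu.comp measurable_fst).heatK (hx.comp measurable_fst)
    measurable_snd α).mul (hf.comp measurable_snd)

theorem integrable_heatK_mul (hα : ∀ j, -1 < α j) {u M : ℝ} (hu : 0 < u) {f : (Fin d → ℝ) → ℝ}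
    (hf : Measurable f) (hM : ∀ y, |f y| ≤ M) (x : Fin d → ℝ) :
    IntegrableOn (fun y => heatK α u x y * f y) (posOrthant d) :=
  (integrable_heatK hα hu x).mul_bdd hf.aestronglyMeasurable (ae_of_all _ hM)

theorem ae_heatK_kernel (hα : ∀ j, -1 < α j) {v : ℝ} (hv : 0 < v) (μ : Measure (Fin d → ℝ)) :
    ∀ᵐ y ∂μ, (∀ᵐ z ∂volume.restrict (posOrthant d), 0 ≤ heatK α v y z) ∧
      IntegrableOn (heatK α v y) (posOrthant d) ∧ ∫ z in posOrthant d, heatK α v y z = 1 :=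
  ae_of_all _ fun y => ⟨ae_of_all _ fun _ => heatK_nonneg _ _ _ _, integrable_heatK hα hv y,
    integral_heatK hα hv y⟩

theorem heatSG_heatSG_eq_integral (hα : ∀ j, -1 < α j) {u v M : ℝ} (hu : 0 < u) (hv : 0 < v)
    {g : (Fin d → ℝ) → ℝ} (hg : Measurable g) (hM : ∀ y, |g y| ≤ M) (x : Fin d → ℝ) :
    heatSG α u (heatSG α v g) x
      = ∫ z in posOrthant d, (∫ y in posOrthant d, heatK α u x y * heatK α v y z) * g z := by
  have hi := integrable_uncurry_mul_kernel (integrable_heatK hα hu x)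
    (k := fun y z => heatK α v y z) (g := fun _ z => g z)
    (measurable_const.heatK measurable_fst measurable_snd α) (hg.comp measurable_snd)
    (ae_heatK_kernel hα hv _) (ae_of_all _ fun _ => ae_of_all _ hM)
  have := integral_integral_swap hi
  simp only [integral_const_mul] at this
  refine this.trans ?_
  simp only [← mul_assoc, integral_mul_const]

theorem heatSG_exp (hα : ∀ j, -1 < α j) {u : ℝ} (hu : 0 < u) {s : Fin d → ℝ} (hs : ∀ j, 0 ≤ s j)
    (x : Fin d → ℝ) :
    heatSG α u (fun y => Real.exp (-∑ j, s j * |y j|)) x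
      = ∏ j, lagLap (α j) (Real.exp (-u)) (s j) |x j| := by
  rw [← integral_heatK_mul_exp hα hu x hs, heatSG]
  refine integral_congr_ae ?_
  filter_upwards [ae_posOrthant_nonneg d] with y hy
  simp only [abs_of_nonneg (hy _)]

theorem abs_exp_neg_sum_le {s : Fin d → ℝ} (hs : ∀ j, 0 ≤ s j) (y : Fin d → ℝ) :
    |Real.exp (-∑ j, s j * |y j|)| ≤ 1 := by
  rw [Real.abs_exp, Real.exp_le_one_iff, neg_nonpos]
  exact Finset.sum_nonneg fun j _ => mul_nonneg (hs j) (abs_nonneg _)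

theorem heatSG_heatSG_exp (hα : ∀ j, -1 < α j) {u v : ℝ} (hu : 0 < u) (hv : 0 < v)
    {s : Fin d → ℝ} (hs : ∀ j, 0 ≤ s j) (x : Fin d → ℝ) :
    heatSG α u (heatSG α v fun y => Real.exp (-∑ j, s j * |y j|)) x
      = heatSG α (u + v) (fun y => Real.exp (-∑ j, s j * |y j|)) x := by
  obtain ⟨hu0, hu1⟩ := exp_neg_mem hu
  obtain ⟨hv0, hv1⟩ := exp_neg_mem hv
  have hs' : ∀ j, 0 ≤ s j * Real.exp (-v) / (1 + s j * (1 - Real.exp (-v))) := fun j => by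
    have := hs j
    have h1 : 0 < 1 - Real.exp (-v) := by linarith
    positivity
  have e : (heatSG α v fun y => Real.exp (-∑ j, s j * |y j|)) = fun y =>
      (∏ j, (1 / (1 + s j * (1 - Real.exp (-v)))) ^ (α j + 1)) *
      Real.exp (-∑ j, s j * Real.exp (-v) / (1 + s j * (1 - Real.exp (-v))) * |y j|) := by
    ext y
    rw [heatSG_exp hα hv hs, ← Finset.sum_neg_distrib, Real.exp_sum, ← Finset.prod_mul_distrib]
    refine Finset.prod_congr rfl fun j _ => ?_
    rw [lagLap]
    congr 3
    ring
  have hlin : ∀ (c : ℝ) (g : (Fin d → ℝ) → ℝ),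
      heatSG α u (fun y => c * g y) x = c * heatSG α u g x := by
    intro c g
    simp only [heatSG, mul_left_comm _ c, integral_const_mul]
  rw [e, hlin, heatSG_exp hα hu hs', heatSG_exp hα (add_pos hu hv) hs, ← Finset.prod_mul_distrib]
  refine Finset.prod_congr rfl fun j _ => ?_
  rw [lagLap_comp hu0 hu1 hv0 hv1 (hs j), ← Real.exp_add, neg_add]

theorem heatK_comp_ae (hα : ∀ j, -1 < α j) {u v : ℝ} (hu : 0 < u) (hv : 0 < v) (x : Fin d → ℝ) :
    (fun z => ∫ y in posOrthant d, heatK α u x y * heatK α v y z)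
      =ᵐ[volume.restrict (posOrthant d)] heatK α (u + v) x := by
  have hi := integrable_uncurry_mul_kernel (integrable_heatK hα hu x)
    (k := fun y z => heatK α v y z) (g := fun _ _ => 1) (M := 1)
    (measurable_const.heatK measurable_fst measurable_snd α) measurable_const
    (ae_heatK_kernel hα hv _) (ae_of_all _ fun _ => ae_of_all _ fun _ => by simp)
  have hc : Integrable (fun z => ∫ y in posOrthant d, heatK α u x y * heatK α v y z)
      (volume.restrict (posOrthant d)) := by
    simpa using hi.integral_prod_right
  have hK := integrable_heatK hα (add_pos hu hv) x
  have := ae_eq_zero_of_laplace_eq_zero (ae_posOrthant_nonneg d) (hc.sub hK) fun s hs => ?_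
  · filter_upwards [this] with z hz
    simpa [sub_eq_zero] using hz
  · set e : (Fin d → ℝ) → ℝ := fun y => Real.exp (-∑ j, s j * |y j|) with he
    have me : Measurable e := by fun_prop
    have be := abs_exp_neg_sum_le hs
    have h1 := heatSG_heatSG_eq_integral hα hu hv me be x
    rw [heatSG_heatSG_exp hα hu hv hs, heatSG] at h1
    have h2 : Integrable (fun z => (∫ y in posOrthant d, heatK α u x y * heatK α v y z) * e z)
      (volume.restrict (posOrthant d)) := hc.mul_bdd me.aestronglyMeasurable (ae_of_all _ be)
    have h3 := integrable_heatK_mul hα (add_pos hu hv) me be x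
    rw [← sub_eq_zero, ← integral_sub h3 h2, ← neg_eq_zero, ← integral_neg] at h1
    refine Eq.trans (integral_congr_ae ?_) h1
    filter_upwards [ae_posOrthant_nonneg d] with y hy
    simp only [he, abs_of_nonneg (hy _), Pi.sub_apply]
    ring

theorem heatSG_heatSG (hα : ∀ j, -1 < α j) {u v M : ℝ} (hu : 0 < u) (hv : 0 < v)
    {g : (Fin d → ℝ) → ℝ} (hg : Measurable g) (hM : ∀ y, |g y| ≤ M) (x : Fin d → ℝ) :
    heatSG α u (heatSG α v g) x = heatSG α (u + v) g x := by
  rw [heatSG_heatSG_eq_integral hα hu hv hg hM, heatSG]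
  refine integral_congr_ae ?_
  filter_upwards [heatK_comp_ae hα hu hv x] with z hz
  rw [hz]

end Heat

section Poisson

variable {d : ℕ} {α : Fin d → ℝ}

theorem levyDens_kernel {t : ℝ} (ht : 0 < t) :
    (∀ᵐ u ∂volume.restrict (Ioi 0), 0 ≤ levyDens t u) ∧ IntegrableOn (levyDens t) (Ioi 0) ∧
      ∫ u in Ioi 0, levyDens t u = 1 := by
  refine ⟨?_, integrableOn_levyDens ht, integral_levyDens ht⟩
  filter_upwards [ae_restrict_mem measurableSet_Ioi] with u hu
  exact levyDens_nonneg ht hu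

/-- The Poisson–Laguerre semigroup, obtained from the heat semigroup by subordination. -/
noncomputable def poisSG (α : Fin d → ℝ) (t : ℝ) (f : (Fin d → ℝ) → ℝ) (x : Fin d → ℝ) : ℝ :=
  ∫ u in Ioi 0, levyDens t u * heatSG α u f x

theorem abs_poisSG_le (hα : ∀ j, -1 < α j) {t M : ℝ} (ht : 0 < t) {f : (Fin d → ℝ) → ℝ}
    (hM : ∀ y, |f y| ≤ M) (x : Fin d → ℝ) : |poisSG α t f x| ≤ M := by
  obtain ⟨h0, hi, h1⟩ := levyDens_kernel ht
  refine abs_integral_kernel_mul_le h0 hi h1 ?_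
  filter_upwards [ae_restrict_mem measurableSet_Ioi] with u hu
  exact abs_heatSG_le hα hu hM x

theorem Measurable.poisSG {Ω : Type*} [MeasurableSpace Ω] {t : Ω → ℝ} {x : Ω → Fin d → ℝ}
    (ht : Measurable t) (hx : Measurable x) (α : Fin d → ℝ) {f : (Fin d → ℝ) → ℝ}
    (hf : Measurable f) : Measurable fun ω => poisSG α (t ω) f (x ω) := by
  unfold _root_.poisSG
  refine (StronglyMeasurable.integral_prod_right (f := fun (ω : Ω) u =>
    levyDens (t ω) u * _root_.heatSG α u f (x ω)) (Measurable.stronglyMeasurable ?_)).measurable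
  have h1 : Measurable fun q : Ω × ℝ => levyDens (t q.1) q.2 := by
    unfold levyDens; fun_prop
  exact h1.mul (measurable_snd.heatSG (hx.comp measurable_fst) α hf)

theorem integrable_levyDens_mul_heatSG (hα : ∀ j, -1 < α j) {t M : ℝ} (ht : 0 < t)
    {f : (Fin d → ℝ) → ℝ} (hf : Measurable f) (hM : ∀ y, |f y| ≤ M) (x : Fin d → ℝ) :
    IntegrableOn (fun u => levyDens t u * heatSG α u f x) (Ioi 0) := by
  refine (integrableOn_levyDens ht).mul_bdd (c := M)
    (measurable_id.heatSG measurable_const α hf).aestronglyMeasurable ?_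
  filter_upwards [ae_restrict_mem measurableSet_Ioi] with u hu
  exact abs_heatSG_le hα hu hM x

theorem poisSG_sub (hα : ∀ j, -1 < α j) {t M N : ℝ} (ht : 0 < t) {f g : (Fin d → ℝ) → ℝ}
    (hf : Measurable f) (hM : ∀ y, |f y| ≤ M) (hg : Measurable g) (hN : ∀ y, |g y| ≤ N)
    (x : Fin d → ℝ) :
    poisSG α t (fun y => f y - g y) x = poisSG α t f x - poisSG α t g x := by
  rw [poisSG, poisSG, poisSG, ← integral_sub (integrable_levyDens_mul_heatSG hα ht hf hM x)
    (integrable_levyDens_mul_heatSG hα ht hg hN x)]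
  refine setIntegral_congr_fun measurableSet_Ioi fun u hu => ?_
  simp only [heatSG]
  rw [← mul_sub, ← integral_sub (integrable_heatK_mul hα hu hf hM x)
    (integrable_heatK_mul hα hu hg hN x)]
  simp only [mul_sub]

theorem poisSG_poisSG (hα : ∀ j, -1 < α j) {t s M : ℝ} (ht : 0 < t) (hs : 0 < s)
    {f : (Fin d → ℝ) → ℝ} (hf : Measurable f) (hM : ∀ y, |f y| ≤ M) (x : Fin d → ℝ) :
    poisSG α t (poisSG α s f) x = poisSG α (t + s) f x := by
  have key : ∀ u ∈ Ioi (0 : ℝ), heatSG α u (poisSG α s f) x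
      = ∫ v in Ioi 0, levyDens s v * heatSG α (u + v) f x := by
    intro u hu
    have hi := integrable_uncurry_mul_kernel (μ := volume.restrict (posOrthant d))
      (ν := volume.restrict (Ioi (0 : ℝ))) (integrable_heatK hα hu x)
      (k := fun _ v => levyDens s v) (g := fun y v => heatSG α v f y) (M := M)
      ((measurable_levyDens s).comp measurable_snd)
      (measurable_snd.heatSG measurable_fst α hf)
      (ae_of_all _ fun _ => levyDens_kernel hs) (ae_of_all _ fun y => ?_)
    · have := integral_integral_swap hi
      simp only [integral_const_mul] at this
      refine this.trans (setIntegral_congr_fun measurableSet_Ioi fun v hv => ?_)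
      simp only [mul_left_comm _ (levyDens s v), integral_const_mul]
      rw [← heatSG_heatSG hα hu hv hf hM]
      rfl
    · filter_upwards [ae_restrict_mem measurableSet_Ioi] with v hv
      exact abs_heatSG_le hα hv hM y
  rw [poisSG, setIntegral_congr_fun measurableSet_Ioi fun u hu => by rw [key u hu],
    integral_levyDens_convolution (G := fun u => heatSG α u f x) ht hs
      (measurable_id.heatSG measurable_const α hf) fun _ hu => abs_heatSG_le hα hu hM x]
  rfl

theorem exists_hasDerivAt_poisSG (hα : ∀ j, -1 < α j) {t M : ℝ} (ht : 0 < t)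
    {f : (Fin d → ℝ) → ℝ} (hf : Measurable f) (hM : ∀ y, |f y| ≤ M) (x : Fin d → ℝ) :
    ∃ D, HasDerivAt (fun t => poisSG α t f x) D t ∧ |D| ≤ 2 * M / t :=
  hasDerivAt_integral_levyDens ht (measurable_id.heatSG measurable_const α hf)
    fun _ hu => abs_heatSG_le hα hu hM x

theorem image_exp_neg_Ioi : (fun u : ℝ => Real.exp (-u)) '' Ioi 0 = Ioo 0 1 := by
  ext r
  constructor
  · rintro ⟨u, hu, rfl⟩
    exact exp_neg_mem hu
  · rintro ⟨h0, h1⟩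
    exact ⟨-Real.log r, neg_pos.2 (Real.log_neg h0 h1), by simp [Real.exp_log h0]⟩

theorem plKernel_eq (hα : ∀ j, -1 < α j) (t : ℝ) {x y : Fin d → ℝ} (hx : x ∈ posOrthant d)
    (hy : y ∈ posOrthant d) :
    plKernel d α t x y = ∫ u in Ioi 0, levyDens t u * heatK α u x y := by
  rw [plKernel, ← image_exp_neg_Ioi, integral_image_eq_integral_abs_deriv_smul measurableSet_Ioi
    (f' := fun u => -Real.exp (-u)), ← integral_const_mul]
  · refine setIntegral_congr_fun measurableSet_Ioi fun u hu => ?_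
    have hu : 0 < u := hu
    obtain ⟨h0, h1⟩ := exp_neg_mem hu
    have e : ∀ j, (y j / x j) ^ (α j / 2) *
        Real.exp (-((Real.exp (-u) * x j + y j) / (1 - Real.exp (-u))) -
          α j * Real.log (Real.exp (-u)) / 2) *
        besselI (α j) (2 * √(Real.exp (-u) * x j * y j) / (1 - Real.exp (-u)))
        = (1 - Real.exp (-u)) * lagKer (α j) (Real.exp (-u)) (x j) (y j) := fun j =>
      besselI_eq_lagKer (hα j) h0 h1 (hx j (mem_univ j)) (hy j (mem_univ j))
    simp only [e, Finset.prod_mul_distrib, Finset.prod_const, Finset.card_univ, Fintype.card_fin]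
    rw [Real.log_exp, neg_neg, abs_neg, Real.abs_exp, smul_eq_mul, levyDens, heatK,
      mul_sqrt_eq_rpow hu, show t ^ 2 / (4 * -u) = -(t ^ 2 / (4 * u)) by field_simp]
    have h2 : 1 - Real.exp (-u) ≠ 0 := by linarith
    have h3 : √π ≠ 0 := by positivity
    have h4 : u ^ ((3 : ℝ) / 2) ≠ 0 := by positivity
    field_simp
  · intro u _
    simpa using ((hasDerivAt_neg u).exp).hasDerivWithinAt
  · intro u _ v _ h
    simpa using h

theorem plP_eq_poisSG (hα : ∀ j, -1 < α j) {t M : ℝ} (ht : 0 < t) {f : (Fin d → ℝ) → ℝ}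
    (hf : Measurable f) (hM : ∀ y, |f y| ≤ M) {x : Fin d → ℝ} (hx : x ∈ posOrthant d) :
    plP d α t f x = poisSG α t f x := by
  have hi := integrable_uncurry_mul_kernel (μ := volume.restrict (Ioi (0 : ℝ)))
    (ν := volume.restrict (posOrthant d)) (integrableOn_levyDens ht)
    (k := fun u y => heatK α u x y) (g := fun _ y => f y) (M := M)
    (measurable_fst.heatK measurable_const measurable_snd α) (hf.comp measurable_snd) ?_
    (ae_of_all _ fun _ => ae_of_all _ hM)
  · have := integral_integral_swap hi
    simp only [integral_const_mul] at this
    rw [plP, if_neg ht.ne']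
    refine Eq.trans (setIntegral_congr_fun (measurableSet_posOrthant d) fun y hy => ?_) this.symm
    simp only [plKernel_eq hα t hx hy, ← mul_assoc, integral_mul_const]
  · filter_upwards [ae_restrict_mem measurableSet_Ioi] with u hu
    exact ⟨ae_of_all _ fun _ => heatK_nonneg _ _ _ _, integrable_heatK hα hu x,
      integral_heatK hα hu x⟩

/-- The density of the Laguerre measure. -/
noncomputable def lagWeight (α : Fin d → ℝ) (x : Fin d → ℝ) : ℝ :=
  ∏ j, x j ^ α j * Real.exp (-x j)

theorem lagWeight_pos {x : Fin d → ℝ} (hx : x ∈ posOrthant d) : 0 < lagWeight α x :=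
  Finset.prod_pos fun j _ => mul_pos (Real.rpow_pos_of_pos (hx j (mem_univ j)) _) (Real.exp_pos _)

theorem integrable_lagWeight (hα : ∀ j, -1 < α j) :
    IntegrableOn (lagWeight α) (posOrthant d) := by
  rw [IntegrableOn, volume_restrict_posOrthant]
  refine Integrable.fintype_prod (f := fun j z => z ^ α j * Real.exp (-z)) fun j => ?_
  have := integrableOn_rpow_mul_exp_neg_mul_rpow (hα j) one_pos one_pos
  simpa [IntegrableOn] using this

theorem heatK_symm (hα : ∀ j, -1 < α j) {u : ℝ} (hu : 0 < u) {x y : Fin d → ℝ}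
    (hx : x ∈ posOrthant d) (hy : y ∈ posOrthant d) :
    lagWeight α x * heatK α u x y = lagWeight α y * heatK α u y x := by
  simp only [lagWeight, heatK, ← Finset.prod_mul_distrib]
  exact Finset.prod_congr rfl fun j _ => lagKer_symm (hα j) (exp_neg_mem hu).1 (exp_neg_mem hu).2
    (hx j (mem_univ j)) (hy j (mem_univ j))

theorem integrable_lagWeight_mul (hα : ∀ j, -1 < α j) {g : (Fin d → ℝ) → ℝ} {N : ℝ}
    (hg : Measurable g) (hN : ∀ y, |g y| ≤ N) :
    IntegrableOn (fun x => lagWeight α x * g x) (posOrthant d) :=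
  (integrable_lagWeight hα).mul_bdd hg.aestronglyMeasurable (ae_of_all _ hN)

theorem integral_lagWeight_mul_heatSG (hα : ∀ j, -1 < α j) {u M N : ℝ} (hu : 0 < u)
    {f g : (Fin d → ℝ) → ℝ} (hf : Measurable f) (hM : ∀ y, |f y| ≤ M) (hg : Measurable g)
    (hN : ∀ y, |g y| ≤ N) :
    ∫ x in posOrthant d, lagWeight α x * g x * heatSG α u f x
      = ∫ y in posOrthant d, lagWeight α y * f y * heatSG α u g y := by
  have hi := integrable_uncurry_mul_kernel (integrable_lagWeight_mul hα hg hN)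
    (k := fun y z => heatK α u y z) (g := fun _ z => f z)
    (measurable_const.heatK measurable_fst measurable_snd α) (hf.comp measurable_snd)
    (ae_heatK_kernel hα hu _) (ae_of_all _ fun _ => ae_of_all _ hM)
  have := integral_integral_swap hi
  simp only [integral_const_mul] at this
  refine this.trans (setIntegral_congr_fun (measurableSet_posOrthant d) fun y hy => ?_)
  simp only [heatSG]
  rw [← integral_const_mul]
  refine setIntegral_congr_fun (measurableSet_posOrthant d) fun x hx => ?_
  linear_combination g x * f y * heatK_symm hα hu hx hy

theorem tendsto_heatSG_exp (hα : ∀ j, -1 < α j) {s : Fin d → ℝ} (hs : ∀ j, 0 ≤ s j)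
    (x : Fin d → ℝ) :
    Filter.Tendsto (fun u => heatSG α u (fun y => Real.exp (-∑ j, s j * |y j|)) x)
      (nhdsWithin 0 (Ioi 0)) (nhds (Real.exp (-∑ j, s j * |x j|))) := by
  have h : Filter.Tendsto (fun u => ∏ j, lagLap (α j) (Real.exp (-u)) (s j) |x j|)
      (nhds 0) (nhds (∏ j, lagLap (α j) (Real.exp (-0)) (s j) |x j|)) := by
    refine tendsto_finsetProd _ fun j _ => ContinuousAt.tendsto ?_
    unfold lagLap
    have : (1 : ℝ) + s j * (1 - Real.exp (-0)) ≠ 0 := by simp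
    have h2 : (1 : ℝ) / (1 + s j * (1 - Real.exp (-0))) ≠ 0 := by simp
    fun_prop (disch := first | assumption | exact Or.inl h2)
  have e : ∏ j, lagLap (α j) (Real.exp (-0)) (s j) |x j| = Real.exp (-∑ j, s j * |x j|) := by
    rw [← Finset.sum_neg_distrib, Real.exp_sum]
    simp [lagLap]
  rw [← e]
  refine (h.mono_left nhdsWithin_le_nhds).congr' ?_
  filter_upwards [self_mem_nhdsWithin] with u hu
  exact (heatSG_exp hα hu hs x).symm

theorem tendsto_integral_lagWeight_mul_poisSG (hα : ∀ j, -1 < α j) {M : ℝ}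
    {f : (Fin d → ℝ) → ℝ} (hf : Measurable f) (hM : ∀ y, |f y| ≤ M) {s : Fin d → ℝ}
    (hs : ∀ j, 0 ≤ s j) :
    Filter.Tendsto (fun t => ∫ x in posOrthant d,
        lagWeight α x * Real.exp (-∑ j, s j * |x j|) * poisSG α t f x)
      (nhdsWithin 0 (Ioi 0))
      (nhds (∫ x in posOrthant d, lagWeight α x * f x * Real.exp (-∑ j, s j * |x j|))) := by
  set e : (Fin d → ℝ) → ℝ := fun y => Real.exp (-∑ j, s j * |y j|) with he
  have me : Measurable e := by fun_prop
  have be : ∀ y, |e y| ≤ 1 := abs_exp_neg_sum_le hs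
  have hwf := integrable_lagWeight_mul hα hf hM
  have hwe := integrable_lagWeight_mul hα me be
  set G : ℝ → ℝ := fun u => ∫ x in posOrthant d, lagWeight α x * e x * heatSG α u f x with hG
  have mG : Measurable G := by
    refine (StronglyMeasurable.integral_prod_right (f := fun (u : ℝ) x =>
      lagWeight α x * e x * heatSG α u f x) (Measurable.stronglyMeasurable ?_)).measurable
    have : Measurable fun x : Fin d → ℝ => lagWeight α x * e x := by unfold lagWeight; fun_prop
    exact (this.comp measurable_snd).mul (measurable_fst.heatSG measurable_snd α hf)
  have bG : ∀ u > 0, |G u| ≤ ∫ x in posOrthant d, ‖lagWeight α x * e x‖ * M := by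
    intro u hu
    refine (Real.norm_eq_abs _).ge.trans
      (norm_integral_le_of_norm_le (hwe.norm.mul_const M) (ae_of_all _ fun x => ?_))
    rw [norm_mul]
    exact mul_le_mul_of_nonneg_left (abs_heatSG_le hα hu hM x) (norm_nonneg _)
  have hL : Filter.Tendsto G (nhdsWithin 0 (Ioi 0))
      (nhds (∫ x in posOrthant d, lagWeight α x * f x * e x)) := by
    have : Filter.Tendsto (fun u => ∫ y in posOrthant d, lagWeight α y * f y * heatSG α u e y)
        (nhdsWithin 0 (Ioi 0)) (nhds (∫ x in posOrthant d, lagWeight α x * f x * e x)) := by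
      refine tendsto_integral_filter_of_dominated_convergence
        (fun x => ‖lagWeight α x * f x‖) ?_ ?_ hwf.norm ?_
      · refine Filter.Eventually.of_forall fun u => hwf.1.mul ?_
        exact (measurable_const.heatSG measurable_id α me).aestronglyMeasurable
      · filter_upwards [self_mem_nhdsWithin] with u hu
        refine ae_of_all _ fun x => ?_
        rw [norm_mul]
        exact mul_le_of_le_one_right (norm_nonneg _) (abs_heatSG_le hα hu be x)
      · exact ae_of_all _ fun x => (tendsto_heatSG_exp hα hs x).const_mul _
    refine this.congr' ?_
    filter_upwards [self_mem_nhdsWithin] with u hu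
    exact (integral_lagWeight_mul_heatSG hα hu hf hM me be).symm
  refine (tendsto_integral_levyDens mG bG hL).congr' ?_
  filter_upwards [self_mem_nhdsWithin] with t ht
  have hi := integrable_uncurry_mul_kernel (ν := volume.restrict (Ioi (0 : ℝ))) hwe
    (k := fun _ v => levyDens t v) (g := fun y v => heatSG α v f y) (M := M)
    ((measurable_levyDens t).comp measurable_snd)
    (measurable_snd.heatSG measurable_fst α hf)
    (ae_of_all _ fun _ => levyDens_kernel ht) (ae_of_all _ fun y => ?_)
  · have := integral_integral_swap hi
    simp only [integral_const_mul] at this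
    refine Eq.trans ?_ this.symm
    simp only [mul_left_comm _ (levyDens t _), integral_const_mul]
    rfl
  · filter_upwards [ae_restrict_mem measurableSet_Ioi] with v hv
    exact abs_heatSG_le hα hv hM y

/-- If the Poisson–Laguerre semigroup applied to `f` converges pointwise, the limit is `f`. -/
theorem ae_eq_of_tendsto_poisSG (hα : ∀ j, -1 < α j) {M : ℝ}
    {f g : (Fin d → ℝ) → ℝ} (hf : Measurable f) (hM : ∀ y, |f y| ≤ M)
    (hg : ∀ x ∈ posOrthant d,
      Filter.Tendsto (fun t => poisSG α t f x) (nhdsWithin 0 (Ioi 0)) (nhds (g x))) :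
    f =ᵐ[volume.restrict (posOrthant d)] g := by
  have hg' : ∀ᵐ x ∂volume.restrict (posOrthant d),
      Filter.Tendsto (fun t => poisSG α t f x) (nhdsWithin 0 (Ioi 0)) (nhds (g x)) := by
    filter_upwards [ae_restrict_mem (measurableSet_posOrthant d)] with x hx using hg x hx
  have mg : AEStronglyMeasurable g (volume.restrict (posOrthant d)) :=
    aestronglyMeasurable_of_tendsto_ae _
      (fun t => (measurable_const.poisSG measurable_id α hf).aestronglyMeasurable) hg'
  have bg : ∀ᵐ x ∂volume.restrict (posOrthant d), ‖g x‖ ≤ M := by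
    filter_upwards [hg'] with x hx
    refine le_of_tendsto hx.norm ?_
    filter_upwards [self_mem_nhdsWithin] with t ht using abs_poisSG_le hα ht hM x
  have hwf := integrable_lagWeight_mul hα hf hM
  have hwg : IntegrableOn (fun x => lagWeight α x * g x) (posOrthant d) :=
    (integrable_lagWeight hα).mul_bdd mg bg
  have hz := ae_eq_zero_of_laplace_eq_zero (ae_posOrthant_nonneg d) (hwf.sub hwg) fun s hs => ?_
  · filter_upwards [hz, ae_restrict_mem (measurableSet_posOrthant d)] with x hx hxQ
    have : lagWeight α x * (f x - g x) = 0 := by simpa [mul_sub] using hx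
    simpa [(lagWeight_pos hxQ).ne', sub_eq_zero] using this
  · set e : (Fin d → ℝ) → ℝ := fun y => Real.exp (-∑ j, s j * |y j|) with he
    have me : Measurable e := by fun_prop
    have be : ∀ y, |e y| ≤ 1 := abs_exp_neg_sum_le hs
    have hwe := integrable_lagWeight_mul hα me be
    have h1 := tendsto_integral_lagWeight_mul_poisSG hα hf hM hs
    have h2 : Filter.Tendsto (fun t => ∫ x in posOrthant d,
        lagWeight α x * e x * poisSG α t f x) (nhdsWithin 0 (Ioi 0))
        (nhds (∫ x in posOrthant d, lagWeight α x * e x * g x)) := by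
      refine tendsto_integral_filter_of_dominated_convergence
        (fun x => ‖lagWeight α x * e x‖ * M) ?_ ?_ (hwe.norm.mul_const M) ?_
      · exact Filter.Eventually.of_forall fun t =>
          hwe.1.mul (measurable_const.poisSG measurable_id α hf).aestronglyMeasurable
      · filter_upwards [self_mem_nhdsWithin] with t ht
        refine ae_of_all _ fun x => ?_
        rw [norm_mul]
        exact mul_le_mul_of_nonneg_left (abs_poisSG_le hα ht hM x) (norm_nonneg _)
      · filter_upwards [hg'] with x hx using hx.const_mul _
    have h3 := tendsto_nhds_unique h1 h2
    have i1 : Integrable (fun x => lagWeight α x * f x * e x) (volume.restrict (posOrthant d)) :=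
      hwf.mul_bdd me.aestronglyMeasurable (ae_of_all _ be)
    have i2 : Integrable (fun x => lagWeight α x * e x * g x) (volume.restrict (posOrthant d)) :=
      hwe.mul_bdd mg bg
    rw [← sub_eq_zero, ← integral_sub i1 i2] at h3
    refine Eq.trans (integral_congr_ae ?_) h3
    filter_upwards [ae_posOrthant_nonneg d] with y hy
    simp only [he, abs_of_nonneg (hy _), Pi.sub_apply]
    ring

end Poisson

theorem abs_sub_le_of_hasDerivAt_rpow {h : ℝ → ℝ} {A β s s' : ℝ} (hβ : 0 < β)
    (hh : ∀ t > 0, ∃ D, HasDerivAt h D t ∧ |D| ≤ A * t ^ (β - 1)) (hs : 0 < s) (hss : s ≤ s') :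
    |h s' - h s| ≤ A / β * (s' ^ β - s ^ β) := by
  choose! D hD hDA using hh
  have hder : ∀ t ∈ Icc s s', HasDerivAt (fun t => h t - h s) (D t) t := fun t ht =>
    (hD t (hs.trans_le ht.1)).sub_const _
  have hB : ∀ t ∈ Icc s s', HasDerivAt (fun t => A / β * (t ^ β - s ^ β)) (A * t ^ (β - 1)) t := by
    intro t ht
    have := ((Real.hasDerivAt_rpow_const (p := β) (Or.inl (hs.trans_le ht.1).ne')).sub_const
      (s ^ β)).const_mul (A / β)
    rwa [show A / β * (β * t ^ (β - 1)) = A * t ^ (β - 1) by field_simp] at this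
  exact image_norm_le_of_norm_deriv_right_le_deriv_boundary' (a := s) (b := s')
    (fun t ht => (hder t ht).continuousAt.continuousWithinAt)
    (fun t ht => (hder t (Ico_subset_Icc_self ht)).hasDerivWithinAt) (by simp)
    (fun t ht => (hB t ht).continuousAt.continuousWithinAt)
    (fun t ht => (hB t (Ico_subset_Icc_self ht)).hasDerivWithinAt)
    (fun t ht => hDA t (hs.trans_le ht.1)) (right_mem_Icc.2 hss)

theorem abs_sub_le_mul_of_hasDerivAt_rpow {h : ℝ → ℝ} {A β q s s' : ℝ} (hβ : β < 1) (hA : 0 ≤ A)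
    (hh : ∀ t > 0, ∃ D, HasDerivAt h D t ∧ |D| ≤ A * t ^ (β - 1)) (hq : 0 < q) (hs : q ≤ s)
    (hs' : q ≤ s') : |h s' - h s| ≤ A * q ^ (β - 1) * |s' - s| := by
  choose! D hD hDA using hh
  refine Convex.norm_image_sub_le_of_norm_hasDerivWithin_le (s := Ici q)
    (fun t ht => (hD t (hq.trans_le ht)).hasDerivWithinAt) (fun t ht => ?_) (convex_Ici q) hs hs'
  refine (hDA t (hq.trans_le ht)).trans (mul_le_mul_of_nonneg_left ?_ hA)
  exact Real.rpow_le_rpow_of_nonpos hq ht (by linarith)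

theorem exists_tendsto_of_hasDerivAt_rpow {h : ℝ → ℝ} {A β M : ℝ} (hβ : 0 < β) (hA : 0 ≤ A)
    (hh : ∀ t > 0, ∃ D, HasDerivAt h D t ∧ |D| ≤ A * t ^ (β - 1)) (hM : ∀ t > 0, |h t| ≤ M) :
    ∃ g, Filter.Tendsto h (nhdsWithin 0 (Ioi 0)) (nhds g) ∧
      ∀ s > 0, |h s - g| ≤ A / β * s ^ β := by
  have hmono : MonotoneOn (fun t => h t + A / β * t ^ β) (Ioi 0) := by
    intro s hs s' _ hss
    have := neg_le_of_abs_le (abs_sub_le_of_hasDerivAt_rpow hβ hh hs hss)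
    simp only
    linarith
  have hbdd : BddBelow ((fun t => h t + A / β * t ^ β) '' Ioi 0) := by
    refine ⟨-M, ?_⟩
    rintro _ ⟨t, ht, rfl⟩
    have ht : 0 < t := ht
    have h1 := neg_le_of_abs_le (hM t ht)
    have h2 : 0 ≤ A / β * t ^ β := by positivity
    simp only
    linarith
  have hpow : Filter.Tendsto (fun t : ℝ => A / β * t ^ β) (nhdsWithin 0 (Ioi 0)) (nhds 0) := by
    have : ContinuousAt (fun t : ℝ => A / β * t ^ β) 0 :=
      (Real.continuousAt_rpow_const 0 β (Or.inr hβ.le)).const_mul _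
    simpa [Real.zero_rpow hβ.ne'] using this.tendsto.mono_left nhdsWithin_le_nhds
  have hlim := (hmono.tendsto_nhdsGT hbdd).sub hpow
  simp only [add_sub_cancel_right, sub_zero] at hlim
  refine ⟨_, hlim, fun s hs => le_of_tendsto (tendsto_const_nhds.sub hlim).abs ?_⟩
  filter_upwards [Ioo_mem_nhdsGT hs] with s' hs'
  refine (abs_sub_le_of_hasDerivAt_rpow hβ hh hs'.1 hs'.2.le).trans ?_
  have : 0 ≤ s' ^ β := Real.rpow_nonneg hs'.1.le _
  exact mul_le_mul_of_nonneg_left (by linarith) (by positivity)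

theorem integral_rpow_mul_min_le {lam p a b T : ℝ} (hlam : 0 < lam) (hp : lam < p) (ha : 0 ≤ a)
    (hb : 0 ≤ b) (hT : 0 < T) :
    IntegrableOn (fun s : ℝ => s ^ (-lam - 1) * min (a * s ^ p) b) (Ioi 0) ∧
    ∫ s in Ioi (0 : ℝ), s ^ (-lam - 1) * min (a * s ^ p) b
      ≤ a * T ^ (p - lam) / (p - lam) + b * T ^ (-lam) / lam := by
  have m : Measurable (fun s : ℝ => s ^ (-lam - 1) * min (a * s ^ p) b) := by fun_prop
  have nn : ∀ s : ℝ, 0 < s → 0 ≤ s ^ (-lam - 1) * min (a * s ^ p) b := fun s hs => by positivity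
  have i1 : IntegrableOn (fun s : ℝ => a * s ^ (p - lam - 1)) (Ioc 0 T) :=
    ((intervalIntegrable_iff_integrableOn_Ioc_of_le hT.le).1
      (intervalIntegral.intervalIntegrable_rpow' (by linarith))).const_mul a
  have i2 : IntegrableOn (fun s : ℝ => b * s ^ (-lam - 1)) (Ioi T) :=
    (integrableOn_Ioi_rpow_of_lt (by linarith) hT).const_mul b
  have b1 : ∀ s ∈ Ioc 0 T, s ^ (-lam - 1) * min (a * s ^ p) b ≤ a * s ^ (p - lam - 1) := by
    intro s hs
    calc s ^ (-lam - 1) * min (a * s ^ p) b ≤ s ^ (-lam - 1) * (a * s ^ p) :=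
          mul_le_mul_of_nonneg_left (min_le_left _ _) (Real.rpow_nonneg hs.1.le _)
      _ = a * s ^ (p - lam - 1) := by
          rw [mul_left_comm, ← Real.rpow_add hs.1]; ring_nf
  have b2 : ∀ s ∈ Ioi T, s ^ (-lam - 1) * min (a * s ^ p) b ≤ b * s ^ (-lam - 1) := by
    intro s hs
    rw [mul_comm b]
    exact mul_le_mul_of_nonneg_left (min_le_right _ _) (Real.rpow_nonneg (hT.trans hs).le _)
  have j1 : IntegrableOn (fun s : ℝ => s ^ (-lam - 1) * min (a * s ^ p) b) (Ioc 0 T) := by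
    refine i1.mono' m.aestronglyMeasurable ?_
    filter_upwards [ae_restrict_mem measurableSet_Ioc] with s hs
    rw [Real.norm_of_nonneg (nn s hs.1)]
    exact b1 s hs
  have j2 : IntegrableOn (fun s : ℝ => s ^ (-lam - 1) * min (a * s ^ p) b) (Ioi T) := by
    refine i2.mono' m.aestronglyMeasurable ?_
    filter_upwards [ae_restrict_mem measurableSet_Ioi] with s hs
    rw [Real.norm_of_nonneg (nn s (hT.trans hs))]
    exact b2 s hs
  rw [← Ioc_union_Ioi_eq_Ioi hT.le]
  refine ⟨j1.union j2, ?_⟩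
  rw [setIntegral_union Ioc_disjoint_Ioi_same measurableSet_Ioi j1 j2]
  refine add_le_add ((setIntegral_mono_on j1 i1 measurableSet_Ioc b1).trans_eq ?_)
    ((setIntegral_mono_on j2 i2 measurableSet_Ioi b2).trans_eq ?_)
  · rw [integral_const_mul, ← intervalIntegral.integral_of_le hT.le,
      integral_rpow (Or.inl (by linarith)), sub_add_cancel,
      Real.zero_rpow (by linarith), sub_zero, mul_div_assoc]
  · rw [integral_const_mul, integral_Ioi_rpow_of_lt (by linarith) hT, sub_add_cancel,
      neg_div_neg_eq,
      mul_div_assoc]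

theorem integrable_rpow_mul_of_abs_le_min {lam p a b : ℝ} (hlam : 0 < lam) (hp : lam < p)
    (ha : 0 ≤ a) (hb : 0 ≤ b) {φ : ℝ → ℝ} (hφ : Measurable φ)
    (h1 : ∀ s > 0, |φ s| ≤ a * s ^ p) (h2 : ∀ s > 0, |φ s| ≤ b) :
    IntegrableOn (fun s : ℝ => s ^ (-lam - 1) * φ s) (Ioi 0) := by
  refine (integral_rpow_mul_min_le hlam hp ha hb one_pos).1.mono'
    (Measurable.aestronglyMeasurable (by fun_prop)) ?_
  filter_upwards [ae_restrict_mem measurableSet_Ioi] with s hs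
  rw [norm_mul, Real.norm_of_nonneg (Real.rpow_nonneg (le_of_lt hs) _)]
  exact mul_le_mul_of_nonneg_left (le_min (h1 s hs) (h2 s hs)) (Real.rpow_nonneg (le_of_lt hs) _)

theorem abs_integral_rpow_mul_le {lam p a b T : ℝ} (hlam : 0 < lam) (hp : lam < p) (ha : 0 ≤ a)
    (hb : 0 ≤ b) (hT : 0 < T) {φ : ℝ → ℝ} (h1 : ∀ s > 0, |φ s| ≤ a * s ^ p)
    (h2 : ∀ s > 0, |φ s| ≤ b) :
    |∫ s in Ioi (0 : ℝ), s ^ (-lam - 1) * φ s|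
      ≤ a * T ^ (p - lam) / (p - lam) + b * T ^ (-lam) / lam := by
  obtain ⟨hi, hle⟩ := integral_rpow_mul_min_le hlam hp ha hb hT
  refine le_trans ?_ hle
  refine (Real.norm_eq_abs _).ge.trans (norm_integral_le_of_norm_le hi ?_)
  filter_upwards [ae_restrict_mem measurableSet_Ioi] with s hs
  rw [norm_mul, Real.norm_of_nonneg (Real.rpow_nonneg (le_of_lt hs) _)]
  exact mul_le_mul_of_nonneg_left (le_min (h1 s hs) (h2 s hs)) (Real.rpow_nonneg (le_of_lt hs) _)

/-- An integrable singular difference quotient forces convergence to the subtracted value. -/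
theorem eq_of_tendsto_of_integrableOn_rpow_mul {lam g c : ℝ} {h : ℝ → ℝ} (hlam : 0 < lam)
    (hg : Filter.Tendsto h (nhdsWithin 0 (Ioi 0)) (nhds g))
    (hi : IntegrableOn (fun s : ℝ => s ^ (-lam - 1) * (h s - c)) (Ioi 0)) : g = c := by
  by_contra hne
  have hδ : 0 < |g - c| / 2 := by
    have := abs_pos.2 (sub_ne_zero.2 hne)
    positivity
  have hev : ∀ᶠ s in nhdsWithin 0 (Ioi 0), |g - c| / 2 < |h s - c| :=
    (hg.sub_const c).abs.eventually (lt_mem_nhds (by linarith))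
  obtain ⟨ε, hε, hsub⟩ := mem_nhdsGT_iff_exists_Ioo_subset.1 hev
  have hε : 0 < ε := hε
  have hpow : IntegrableOn (fun s : ℝ => s ^ (-lam - 1)) (Ioo 0 ε) := by
    refine (((hi.mono_set Ioo_subset_Ioi_self).norm).const_mul (1 / (|g - c| / 2))).mono'
      (Measurable.aestronglyMeasurable (by fun_prop)) ?_
    filter_upwards [ae_restrict_mem measurableSet_Ioo] with s hs
    have h1 : |g - c| / 2 < |h s - c| := hsub hs
    have h2 : 0 ≤ s ^ (-lam - 1) := Real.rpow_nonneg hs.1.le _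
    rw [norm_mul, Real.norm_of_nonneg h2, Real.norm_eq_abs, one_div_mul_eq_div, le_div_iff₀ hδ]
    exact mul_le_mul_of_nonneg_left h1.le h2
  have := (intervalIntegral.integrableOn_Ioo_rpow_iff hε).1 hpow
  linarith

theorem integrable_uncurry_mul_of_abs_le {X Y : Type*} [MeasurableSpace X] [MeasurableSpace Y]
    {μ : Measure X} {ν : Measure Y} [SFinite μ] [SFinite ν] {a : X → ℝ} {G : X → Y → ℝ} {B : Y → ℝ}
    (ha : Integrable a μ) (mG : Measurable (Function.uncurry G)) (hB : Integrable B ν)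
    (hG : ∀ᵐ x ∂μ, ∀ᵐ y ∂ν, |G x y| ≤ B y) :
    Integrable (Function.uncurry fun x y => a x * G x y) (μ.prod ν) := by
  have hm : AEStronglyMeasurable (Function.uncurry fun x y => a x * G x y) (μ.prod ν) :=
    ha.1.comp_fst.mul mG.aestronglyMeasurable
  refine (integrable_prod_iff hm).2 ⟨?_, ?_⟩
  · filter_upwards [hG] with x hx
    have m2 : Measurable (G x) := mG.comp measurable_prodMk_left
    exact (hB.mono' m2.aestronglyMeasurable hx).const_mul (a x)
  · refine (ha.norm.mul_const (∫ y, B y ∂ν)).mono' hm.norm.integral_prod_right' ?_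
    filter_upwards [hG] with x hx
    rw [Real.norm_of_nonneg (integral_nonneg fun _ => norm_nonneg _), ← integral_const_mul]
    refine integral_mono_of_nonneg (ae_of_all _ fun _ => norm_nonneg _) (hB.const_mul _) ?_
    filter_upwards [hx] with y hy
    simp only [Function.uncurry_apply_pair, norm_mul]
    exact mul_le_mul_of_nonneg_left hy (norm_nonneg _)

section Lipschitz

variable {d : ℕ} {α : Fin d → ℝ} {f : (Fin d → ℝ) → ℝ} {M A β lam : ℝ}

theorem hasDerivAt_poisSG_of_deriv_plP_le (hα : ∀ j, -1 < α j) (hf : Measurable f)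
    (hM : ∀ y, |f y| ≤ M) {x : Fin d → ℝ} (hx : x ∈ posOrthant d)
    (hA : ∀ t > (0 : ℝ), |deriv (fun u => plP d α u f x) t| ≤ A * t ^ (β - 1)) :
    ∀ t > 0, ∃ D, HasDerivAt (fun t => poisSG α t f x) D t ∧ |D| ≤ A * t ^ (β - 1) := by
  intro t ht
  obtain ⟨D, hD, -⟩ := exists_hasDerivAt_poisSG hα ht hf hM x
  refine ⟨D, hD, ?_⟩
  have e : (fun u => plP d α u f x) =ᶠ[nhds t] fun u => poisSG α u f x := by
    filter_upwards [lt_mem_nhds ht] with u hu using plP_eq_poisSG hα hu hf hM hx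
  rw [← hD.deriv, ← e.deriv_eq]
  exact hA t ht

theorem abs_poisSG_sub_le (hα : ∀ j, -1 < α j) {t M N : ℝ} (ht : 0 < t)
    (hM : ∀ y, |f y| ≤ M) (x : Fin d → ℝ) {c : ℝ} (hc : |c| ≤ N) : |poisSG α t f x - c| ≤ M + N :=
  (abs_sub _ _).trans (add_le_add (abs_poisSG_le hα ht hM x) hc)

theorem abs_laguerreFracDeriv_le (hα : ∀ j, -1 < α j) (hlam : 0 < lam) (hlamβ : lam < β)
    (hf : Measurable f) (hM : ∀ y, |f y| ≤ M) (hA0 : 0 ≤ A) {x : Fin d → ℝ}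
    (hx : x ∈ posOrthant d)
    (hh : ∀ t > 0, ∃ D, HasDerivAt (fun t => poisSG α t f x) D t ∧ |D| ≤ A * t ^ (β - 1)) :
    |laguerreFracDeriv d α lam f x|
      ≤ |1 / ∫ u in Ioi (0 : ℝ), u ^ (-lam - 1) * (Real.exp (-u) - 1)| *
        (A / β / (β - lam) + (M + M) / lam) := by
  have hβ : 0 < β := hlam.trans hlamβ
  have hM0 : 0 ≤ M := (abs_nonneg _).trans (hM x)
  have hβl : 0 < β - lam := sub_pos.2 hlamβ
  rw [laguerreFracDeriv, abs_mul]
  refine mul_le_mul_of_nonneg_left ?_ (abs_nonneg _)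
  rw [setIntegral_congr_fun (g := fun s => s ^ (-lam - 1) * (poisSG α s f x - f x))
    measurableSet_Ioi fun s hs => by simp only [plP_eq_poisSG hα hs hf hM hx]]
  by_cases hi : IntegrableOn (fun s => s ^ (-lam - 1) * (poisSG α s f x - f x)) (Ioi 0)
  · obtain ⟨g, hg, hgs⟩ := exists_tendsto_of_hasDerivAt_rpow hβ hA0 hh
      fun t ht => abs_poisSG_le hα ht hM x
    obtain rfl := eq_of_tendsto_of_integrableOn_rpow_mul hlam hg hi
    have := abs_integral_rpow_mul_le hlam hlamβ (a := A / β) (by positivity) (b := M + M)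
      (by positivity) one_pos hgs fun s hs => abs_poisSG_sub_le hα hs hM x (hM x)
    simpa using this
  · rw [integral_undef hi, abs_zero]
    positivity

theorem ae_abs_poisSG_sub_le (hα : ∀ j, -1 < α j) (hβ : 0 < β)
    (hf : Measurable f) (hM : ∀ y, |f y| ≤ M) (hA0 : 0 ≤ A)
    (hh : ∀ x ∈ posOrthant d, ∀ t > 0, ∃ D,
      HasDerivAt (fun t => poisSG α t f x) D t ∧ |D| ≤ A * t ^ (β - 1)) :
    ∀ᵐ y ∂volume.restrict (posOrthant d), ∀ s > 0, |poisSG α s f y - f y| ≤ A / β * s ^ β := by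
  have hex : ∀ x ∈ posOrthant d, ∃ g,
      Filter.Tendsto (fun t => poisSG α t f x) (nhdsWithin 0 (Ioi 0)) (nhds g) ∧
      ∀ s > 0, |poisSG α s f x - g| ≤ A / β * s ^ β := fun x hx =>
    exists_tendsto_of_hasDerivAt_rpow hβ hA0 (hh x hx) fun t ht => abs_poisSG_le hα ht hM x
  choose! g hg hgs using hex
  filter_upwards [ae_eq_of_tendsto_poisSG hα hf hM hg,
    ae_restrict_mem (measurableSet_posOrthant d)] with y hy hyQ
  rw [hy]
  exact hgs y hyQ

theorem integrableOn_plKernel (hα : ∀ j, -1 < α j) {t : ℝ} (ht : 0 < t) {x : Fin d → ℝ}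
    (hx : x ∈ posOrthant d) : IntegrableOn (plKernel d α t x) (posOrthant d) := by
  have hi := integrable_uncurry_mul_kernel (μ := volume.restrict (Ioi (0 : ℝ)))
    (ν := volume.restrict (posOrthant d)) (integrableOn_levyDens ht)
    (k := fun u y => heatK α u x y) (g := fun _ _ => 1) (M := 1)
    (measurable_fst.heatK measurable_const measurable_snd α) measurable_const ?_
    (ae_of_all _ fun _ => ae_of_all _ fun _ => by simp)
  · refine IntegrableOn.congr_fun hi.integral_prod_right (fun y hy => ?_)
      (measurableSet_posOrthant d)
    simp [plKernel_eq hα t hx hy]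
  · filter_upwards [ae_restrict_mem measurableSet_Ioi] with u hu
    exact ⟨ae_of_all _ fun _ => heatK_nonneg _ _ _ _, integrable_heatK hα hu x,
      integral_heatK hα hu x⟩

theorem plP_laguerreFracDeriv (hα : ∀ j, -1 < α j) (hlam : 0 < lam) (hlamβ : lam < β)
    (hf : Measurable f) (hM : ∀ y, |f y| ≤ M) (hA0 : 0 ≤ A)
    (hh : ∀ x ∈ posOrthant d, ∀ t > 0, ∃ D,
      HasDerivAt (fun t => poisSG α t f x) D t ∧ |D| ≤ A * t ^ (β - 1))
    {t : ℝ} (ht : 0 < t) {x : Fin d → ℝ} (hx : x ∈ posOrthant d) :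
    plP d α t (laguerreFracDeriv d α lam f) x
      = (1 / ∫ u in Ioi (0 : ℝ), u ^ (-lam - 1) * (Real.exp (-u) - 1)) *
        ∫ s in Ioi (0 : ℝ), s ^ (-lam - 1) * (poisSG α (t + s) f x - poisSG α t f x) := by
  have hβ : 0 < β := hlam.trans hlamβ
  have hM0 : 0 ≤ M := (abs_nonneg _).trans (hM x)
  have mφ : Measurable (Function.uncurry fun (y : Fin d → ℝ) (s : ℝ) =>
      s ^ (-lam - 1) * (poisSG α s f y - f y)) := by
    have h1 : Measurable fun q : (Fin d → ℝ) × ℝ => poisSG α q.2 f q.1 :=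
      measurable_snd.poisSG measurable_fst α hf
    exact (measurable_snd.pow_const _).mul (h1.sub (hf.comp measurable_fst))
  have hi := integrable_uncurry_mul_of_abs_le (integrableOn_plKernel hα ht hx) mφ
    (integral_rpow_mul_min_le hlam hlamβ (a := A / β) (by positivity) (b := M + M)
      (by positivity) one_pos).1 ?_
  · have hsw := integral_integral_swap hi
    simp only [integral_const_mul] at hsw
    rw [plP, if_neg ht.ne']
    have e1 : ∀ y ∈ posOrthant d, plKernel d α t x y * laguerreFracDeriv d α lam f y
        = (1 / ∫ u in Ioi (0 : ℝ), u ^ (-lam - 1) * (Real.exp (-u) - 1)) *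
          (plKernel d α t x y *
            ∫ s in Ioi (0 : ℝ), s ^ (-lam - 1) * (poisSG α s f y - f y)) := by
      intro y hy
      have e0 : ∫ s in Ioi (0 : ℝ), s ^ (-lam - 1) * (plP d α s f y - f y)
          = ∫ s in Ioi (0 : ℝ), s ^ (-lam - 1) * (poisSG α s f y - f y) :=
        setIntegral_congr_fun measurableSet_Ioi fun s hs => by
          simp only [plP_eq_poisSG hα hs hf hM hy]
      rw [laguerreFracDeriv, e0, mul_left_comm]
    rw [setIntegral_congr_fun (measurableSet_posOrthant d) e1, integral_const_mul, hsw]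
    congr 1
    refine setIntegral_congr_fun measurableSet_Ioi fun s hs => ?_
    have mP : Measurable (poisSG α s f) := measurable_const.poisSG measurable_id α hf
    have bP : ∀ y, |poisSG α s f y| ≤ M := abs_poisSG_le hα hs hM
    have e2 := plP_eq_poisSG hα ht (mP.sub hf)
      (fun y => abs_poisSG_sub_le hα hs hM y (hM y)) hx
    rw [plP, if_neg ht.ne'] at e2
    simp only [mul_left_comm _ (s ^ (-lam - 1)), integral_const_mul]
    rw [← poisSG_poisSG hα ht hs hf hM, ← poisSG_sub hα ht mP bP hf hM]
    exact congrArg _ e2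
  · filter_upwards [ae_abs_poisSG_sub_le hα hβ hf hM hA0 hh] with y hy
    filter_upwards [ae_restrict_mem measurableSet_Ioi] with s hs
    have h0 : 0 ≤ s ^ (-lam - 1) := Real.rpow_nonneg (le_of_lt hs) _
    rw [abs_mul, abs_of_nonneg h0]
    exact mul_le_mul_of_nonneg_left
      (le_min (hy s hs) (abs_poisSG_sub_le hα hs hM y (hM y))) h0

theorem abs_poisSG_second_difference_le (hα : ∀ j, -1 < α j) (hβ : β < 1)
    (hf : Measurable f) (hM : ∀ y, |f y| ≤ M) (hA0 : 0 ≤ A)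
    (hh : ∀ x ∈ posOrthant d, ∀ t > 0, ∃ D,
      HasDerivAt (fun t => poisSG α t f x) D t ∧ |D| ≤ A * t ^ (β - 1))
    {q s τ t : ℝ} (hq : 0 < q) (hs : 0 < s) (hτ : 2 * q ≤ τ) (ht : 2 * q ≤ t) (x : Fin d → ℝ) :
    |(poisSG α (τ + s) f x - poisSG α τ f x) - (poisSG α (t + s) f x - poisSG α t f x)|
      ≤ 2 * (A * q ^ (β - 1) * s) / q * |τ - t| := by
  have hqs : 0 < q + s := by positivity
  set w : (Fin d → ℝ) → ℝ := (posOrthant d).indicator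
    fun y => poisSG α (q + s) f y - poisSG α q f y with hw
  have mP : ∀ r, Measurable (poisSG α r f) := fun r =>
    measurable_const.poisSG measurable_id α hf
  have mw : Measurable w := ((mP _).sub (mP _)).indicator (measurableSet_posOrthant d)
  have bw : ∀ y, |w y| ≤ A * q ^ (β - 1) * s := by
    intro y
    by_cases hy : y ∈ posOrthant d
    · rw [hw, indicator_of_mem hy]
      have := abs_sub_le_mul_of_hasDerivAt_rpow hβ hA0 (hh y hy) hq le_rfl
        (le_add_of_nonneg_right hs.le : q ≤ q + s)
      rwa [add_sub_cancel_left, abs_of_pos hs] at this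
    · rw [hw, indicator_of_notMem hy, abs_zero]
      positivity
  have hrep : ∀ r ≥ 2 * q, poisSG α (r + s) f x - poisSG α r f x = poisSG α (r - q) w x := by
    intro r hr
    have hrq : 0 < r - q := by linarith
    have e : poisSG α (r - q) w x
        = poisSG α (r - q) (fun y => poisSG α (q + s) f y - poisSG α q f y) x := by
      unfold poisSG heatSG
      refine integral_congr_ae (ae_of_all _ fun u => ?_)
      refine congrArg _ (setIntegral_congr_fun (measurableSet_posOrthant d) fun y hy => ?_)
      simp only [hw, indicator_of_mem hy]
      rfl
    rw [e, poisSG_sub hα hrq (mP _) (abs_poisSG_le hα hqs hM) (mP _) (abs_poisSG_le hα hq hM),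
      poisSG_poisSG hα hrq hqs hf hM, poisSG_poisSG hα hrq hq hf hM]
    congr 2 <;> ring
  rw [hrep τ hτ, hrep t ht]
  have hder : ∀ r ≥ q, ∃ D, HasDerivAt (fun r => poisSG α r w x) D r ∧
      |D| ≤ 2 * (A * q ^ (β - 1) * s) / q := by
    intro r hr
    obtain ⟨D, hD, hb⟩ := exists_hasDerivAt_poisSG hα (hq.trans_le hr) mw bw x
    refine ⟨D, hD, hb.trans ?_⟩
    exact div_le_div_of_nonneg_left (by positivity) hq hr
  choose! D hD hDb using hder
  have := Convex.norm_image_sub_le_of_norm_hasDerivWithin_le (s := Ici q)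
    (fun r hr => (hD r hr).hasDerivWithinAt) hDb (convex_Ici q)
    (show t - q ∈ Ici q by simp only [mem_Ici]; linarith)
    (show τ - q ∈ Ici q by simp only [mem_Ici]; linarith)
  simpa only [Real.norm_eq_abs, sub_sub_sub_cancel_right] using this

theorem abs_deriv_plP_laguerreFracDeriv_le (hα : ∀ j, -1 < α j) (hlam : 0 < lam) (hlamβ : lam < β)
    (hβ1 : β < 1) (hf : Measurable f) (hM : ∀ y, |f y| ≤ M) (hA0 : 0 ≤ A)
    (hh : ∀ x ∈ posOrthant d, ∀ t > 0, ∃ D,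
      HasDerivAt (fun t => poisSG α t f x) D t ∧ |D| ≤ A * t ^ (β - 1))
    {t : ℝ} (ht : 0 < t) {x : Fin d → ℝ} (hx : x ∈ posOrthant d) :
    |deriv (fun u => plP d α u (laguerreFracDeriv d α lam f) x) t|
      ≤ |1 / ∫ u in Ioi (0 : ℝ), u ^ (-lam - 1) * (Real.exp (-u) - 1)| *
        (2 * A * (1 / (1 - lam) + 1 / lam) * (t / 4) ^ (β - lam - 1)) := by
  have hM0 : 0 ≤ M := (abs_nonneg _).trans (hM x)
  have hlam1 : 0 < 1 - lam := by linarith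
  set q := t / 4 with hq_def
  have hq : 0 < q := by positivity
  set c := 1 / ∫ u in Ioi (0 : ℝ), u ^ (-lam - 1) * (Real.exp (-u) - 1)
  have hint : ∀ τ > 0, IntegrableOn (fun s : ℝ => s ^ (-lam - 1) *
      (poisSG α (τ + s) f x - poisSG α τ f x)) (Ioi 0) := by
    intro τ hτ
    refine integrable_rpow_mul_of_abs_le_min hlam (hlamβ.trans hβ1)
      (a := A * τ ^ (β - 1)) (by positivity) (b := M + M) (by positivity) ?_ ?_ ?_
    · have : Measurable fun s : ℝ => poisSG α (τ + s) f x :=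
        (measurable_const_add τ).poisSG measurable_const α hf
      exact this.sub_const _
    · intro s hs
      have := abs_sub_le_mul_of_hasDerivAt_rpow hβ1 hA0 (hh x hx) hτ le_rfl
        (le_add_of_nonneg_right (le_of_lt hs) : τ ≤ τ + s)
      rw [Real.rpow_one]
      rwa [add_sub_cancel_left, abs_of_pos hs] at this
    · exact fun s hs => abs_poisSG_sub_le hα (add_pos hτ hs) hM x (abs_poisSG_le hα hτ hM x)
  have hC : 0 ≤ |c| * (2 * A * (1 / (1 - lam) + 1 / lam) * q ^ (β - lam - 1)) := by positivity
  refine norm_deriv_le_of_lip' (𝕜 := ℝ) (F := ℝ) hC ?_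
  filter_upwards [lt_mem_nhds (by linarith : 2 * q < t)] with τ hτ
  have hτ0 : 0 < τ := by linarith
  have ht2 : 2 * q ≤ t := by linarith
  rw [plP_laguerreFracDeriv hα hlam hlamβ hf hM hA0 hh hτ0 hx,
    plP_laguerreFracDeriv hα hlam hlamβ hf hM hA0 hh ht hx, ← mul_sub,
    ← integral_sub (hint τ hτ0) (hint t ht), norm_mul, Real.norm_eq_abs, Real.norm_eq_abs,
    Real.norm_eq_abs, mul_assoc]
  refine mul_le_mul_of_nonneg_left ?_ (abs_nonneg _)
  simp only [← mul_sub]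
  have h1 : ∀ s > 0, |(poisSG α (τ + s) f x - poisSG α τ f x) -
      (poisSG α (t + s) f x - poisSG α t f x)|
      ≤ 2 * A * q ^ (β - 1) / q * |τ - t| * s ^ (1 : ℝ) := by
    intro s hs
    refine (abs_poisSG_second_difference_le hα hβ1 hf hM hA0 hh hq hs hτ.le ht2 x).trans_eq ?_
    rw [Real.rpow_one]
    ring
  have h2 : ∀ s > 0, |(poisSG α (τ + s) f x - poisSG α τ f x) -
      (poisSG α (t + s) f x - poisSG α t f x)| ≤ 2 * A * q ^ (β - 1) * |τ - t| := by
    intro s hs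
    have hs : 0 < s := hs
    have a1 := abs_sub_le_mul_of_hasDerivAt_rpow hβ1 hA0 (hh x hx) hq
      (by linarith : q ≤ t + s) (by linarith : q ≤ τ + s)
    have a2 := abs_sub_le_mul_of_hasDerivAt_rpow hβ1 hA0 (hh x hx) hq
      (by linarith : q ≤ t) (by linarith : q ≤ τ)
    rw [add_sub_add_right_eq_sub] at a1
    rw [sub_sub_sub_comm]
    refine (abs_sub _ _).trans ((add_le_add a1 a2).trans_eq ?_)
    ring
  refine (abs_integral_rpow_mul_le hlam (hlamβ.trans hβ1) (by positivity) (by positivity) hq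
    h1 h2).trans_eq ?_
  have e1 : q ^ (β - 1) / q * q ^ (1 - lam) = q ^ (β - lam - 1) := by
    rw [← Real.rpow_sub_one hq.ne', ← Real.rpow_add hq]; ring_nf
  have e2 : q ^ (β - 1) * q ^ (-lam) = q ^ (β - lam - 1) := by
    rw [← Real.rpow_add hq]; ring_nf
  linear_combination 2 * A * |τ - t| / (1 - lam) * e1 + 2 * A * |τ - t| / lam * e2

end Lipschitz

theorem laguerreFracDeriv_bounded_on_lipschitz
    (d : ℕ) (hd : 1 ≤ d) (α : Fin d → ℝ) (hα : ∀ j, -(1 / 2 : ℝ) < α j)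
    (lam β : ℝ) (hlam : 0 < lam) (hlamβ : lam < β) (hβ : β < 1) :
    ∃ C > 0, ∀ (f : (Fin d → ℝ) → ℝ) (M A : ℝ), Measurable f → (∀ y, |f y| ≤ M) →
      (∀ t > (0 : ℝ), ∀ x ∈ posOrthant d,
        |deriv (fun u => plP d α u f x) t| ≤ A * t ^ (β - 1)) →
      (∀ x ∈ posOrthant d, |laguerreFracDeriv d α lam f x| ≤ C * (M + A)) ∧
      (∀ t > (0 : ℝ), ∀ x ∈ posOrthant d,
        |deriv (fun u => plP d α u (laguerreFracDeriv d α lam f) x) t| ≤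
          C * (M + A) * t ^ (β - lam - 1)) := by
  have hα1 : ∀ j, -1 < α j := fun j => by linarith [hα j]
  have hβ0 : 0 < β := hlam.trans hlamβ
  have hβl : 0 < β - lam := sub_pos.2 hlamβ
  have hlam1 : 0 < 1 - lam := by linarith
  set c := |1 / ∫ u in Ioi (0 : ℝ), u ^ (-lam - 1) * (Real.exp (-u) - 1)| with hc
  have hc0 : 0 ≤ c := abs_nonneg _
  set K₁ := 1 / β / (β - lam) with hK₁
  set K₂ := 2 / lam with hK₂
  set K₃ := 2 * (1 / (1 - lam) + 1 / lam) * (1 / 4 : ℝ) ^ (β - lam - 1) with hK₃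
  have k1 : 0 ≤ K₁ := by positivity
  have k2 : 0 ≤ K₂ := by positivity
  have k3 : 0 ≤ K₃ := by positivity
  refine ⟨c * (K₁ + K₂ + K₃) + 1, by positivity, fun f M A hf hM hA => ?_⟩
  have hM0 : 0 ≤ M := (abs_nonneg _).trans (hM 0)
  have hA0 : 0 ≤ A := by
    have := (abs_nonneg _).trans (hA 1 one_pos 1 fun _ _ => by simp)
    simpa using this
  have hh : ∀ x ∈ posOrthant d, ∀ t > 0, ∃ D,
      HasDerivAt (fun t => poisSG α t f x) D t ∧ |D| ≤ A * t ^ (β - 1) := fun x hx =>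
    hasDerivAt_poisSG_of_deriv_plP_le hα1 hf hM hx fun t ht => hA t ht x hx
  constructor
  · intro x hx
    refine (abs_laguerreFracDeriv_le hα1 hlam hlamβ hf hM hA0 hx (hh x hx)).trans ?_
    rw [← hc, show A / β / (β - lam) + (M + M) / lam = K₁ * A + K₂ * M by rw [hK₁, hK₂]; ring]
    have : K₁ * A + K₂ * M ≤ (K₁ + K₂ + K₃) * (M + A) := by
      nlinarith [mul_nonneg k1 hM0, mul_nonneg k2 hA0, mul_nonneg k3 (add_nonneg hM0 hA0)]
    nlinarith [mul_le_mul_of_nonneg_left this hc0]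
  · intro t ht x hx
    refine (abs_deriv_plP_laguerreFracDeriv_le hα1 hlam hlamβ hβ hf hM hA0 hh ht hx).trans ?_
    have ht0 : 0 ≤ t ^ (β - lam - 1) := Real.rpow_nonneg (le_of_lt ht) _
    rw [← hc, div_eq_mul_one_div t 4, Real.mul_rpow (le_of_lt ht) (by norm_num),
      show c * (2 * A * (1 / (1 - lam) + 1 / lam) *
        (t ^ (β - lam - 1) * (1 / 4) ^ (β - lam - 1))) = c * (K₃ * A) * t ^ (β - lam - 1) by
        rw [hK₃]; ring]
    refine mul_le_mul_of_nonneg_right ?_ ht0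
    have : K₃ * A ≤ (K₁ + K₂ + K₃) * (M + A) := by
      nlinarith [mul_nonneg k3 hM0, mul_nonneg (add_nonneg k1 k2) (add_nonneg hM0 hA0)]
    nlinarith [mul_le_mul_of_nonneg_left this hc0]
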